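/- arXiv:0810.0935 — 9 statements merged into one kernel-verified Lean document; each statement's English description precedes it below -/
import Mathlib

section
/- There is no algorithm which takes as input two finite lists of elements of GL(4,ℤ) and decides whether the subgroups of GL(4,ℤ) generated by these lists are conjugate in GL(4,ℤ). Formally: the predicate on pairs (l₁, l₂) of lists of elements of GL(4,ℤ) asserting that there exists g ∈ GL(4,ℤ) with g⁻¹ · (Subgroup.closure of the set of entries of l₁) · g = Subgroup.closure of the set of entries of l₂ is not a computable predicate. -/
namespace GLPrimcodable

theorem encode_int_ofNat (n : ℕ) : Encodable.encode (Int.ofNat n) = 2 * n := rfl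
theorem encode_int_natCast (n : ℕ) : Encodable.encode ((n : ℤ)) = 2 * n := rfl
theorem encode_int_negSucc (n : ℕ) : Encodable.encode (Int.negSucc n) = 2 * n + 1 := rfl

theorem primrec_toNat : Primrec Int.toNat := by
  have hg : Primrec (fun c : ℕ => if c % 2 = 0 then c / 2 else 0) :=
    Primrec.ite
      (PrimrecRel.comp Primrec.eq (Primrec.nat_mod.comp .id (.const 2)) (.const 0))
      (Primrec.nat_div.comp .id (.const 2)) (.const 0)
  have h := hg.comp (Primrec.encode (α := ℤ))
  refine h.of_eq ?_
  rintro (n | n)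
  · rw [encode_int_ofNat]
    simp only [Int.ofNat_eq_natCast]
    split_ifs with h1 <;> omega
  · rw [encode_int_negSucc, Int.negSucc_eq]
    split_ifs with h1 <;> omega

theorem primrec_negToNat : Primrec (fun z : ℤ => (-z).toNat) := by
  have hg : Primrec (fun c : ℕ => if c % 2 = 1 then c / 2 + 1 else 0) :=
    Primrec.ite
      (PrimrecRel.comp Primrec.eq (Primrec.nat_mod.comp .id (.const 2)) (.const 1))
      (Primrec.succ.comp (Primrec.nat_div.comp .id (.const 2))) (.const 0)
  have h := hg.comp (Primrec.encode (α := ℤ))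
  refine h.of_eq ?_
  rintro (n | n)
  · rw [encode_int_ofNat]
    simp only [Int.ofNat_eq_natCast]
    split_ifs with h1 <;> omega
  · rw [encode_int_negSucc, Int.negSucc_eq]
    split_ifs with h1 <;> omega

theorem primrec_intSubNat : Primrec₂ (fun a b : ℕ => (a : ℤ) - b) := by
  have hg : Primrec (fun p : ℕ × ℕ =>
      Denumerable.ofNat ℤ (if p.2 ≤ p.1 then 2 * (p.1 - p.2) else 2 * (p.2 - p.1) - 1)) :=
    (Primrec.ofNat ℤ).comp <|
      Primrec.ite (PrimrecRel.comp Primrec.nat_le Primrec.snd Primrec.fst)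
        ((Primrec.nat_mul.comp (.const 2) (Primrec.nat_sub.comp .fst .snd)))
        (Primrec.nat_sub.comp (Primrec.nat_mul.comp (.const 2)
          (Primrec.nat_sub.comp .snd .fst)) (.const 1))
  refine Primrec₂.mk (hg.of_eq ?_)
  rintro ⟨a, b⟩
  by_cases h : b ≤ a
  · have h1 : ((a : ℤ) - b) = ((a - b : ℕ) : ℤ) := by omega
    rw [if_pos h, h1, show (2 * (a - b) = Encodable.encode (((a - b : ℕ) : ℤ))) from rfl,
      Denumerable.ofNat_encode]
  · have h1 : ((a : ℤ) - b) = Int.negSucc (b - a - 1) := by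
      rw [Int.negSucc_eq]; omega
    have h2 : 2 * (b - a) - 1 = Encodable.encode (Int.negSucc (b - a - 1)) := by
      rw [encode_int_negSucc]; omega
    rw [if_neg h, h1, h2, Denumerable.ofNat_encode]

theorem toNat_sub_neg_toNat (z : ℤ) : (z.toNat : ℤ) - (-z).toNat = z := by omega

theorem primrec_int_add : Primrec₂ ((· + ·) : ℤ → ℤ → ℤ) := by
  have h : Primrec (fun p : ℤ × ℤ =>
      ((p.1.toNat + p.2.toNat : ℕ) : ℤ) - ((-p.1).toNat + (-p.2).toNat : ℕ)) :=
    primrec_intSubNat.comp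
      (Primrec.nat_add.comp (primrec_toNat.comp .fst) (primrec_toNat.comp .snd))
      (Primrec.nat_add.comp (primrec_negToNat.comp .fst) (primrec_negToNat.comp .snd))
  refine Primrec₂.mk (h.of_eq ?_)
  rintro ⟨a, b⟩
  push_cast
  omega

theorem primrec_int_mul : Primrec₂ ((· * ·) : ℤ → ℤ → ℤ) := by
  have h : Primrec (fun p : ℤ × ℤ =>
      ((p.1.toNat * p.2.toNat + (-p.1).toNat * (-p.2).toNat : ℕ) : ℤ) -
        (p.1.toNat * (-p.2).toNat + (-p.1).toNat * p.2.toNat : ℕ)) :=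
    primrec_intSubNat.comp
      (Primrec.nat_add.comp
        (Primrec.nat_mul.comp (primrec_toNat.comp .fst) (primrec_toNat.comp .snd))
        (Primrec.nat_mul.comp (primrec_negToNat.comp .fst) (primrec_negToNat.comp .snd)))
      (Primrec.nat_add.comp
        (Primrec.nat_mul.comp (primrec_toNat.comp .fst) (primrec_negToNat.comp .snd))
        (Primrec.nat_mul.comp (primrec_negToNat.comp .fst) (primrec_toNat.comp .snd)))
  refine Primrec₂.mk (h.of_eq ?_)
  rintro ⟨a, b⟩
  have ha := toNat_sub_neg_toNat a
  have hb := toNat_sub_neg_toNat b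
  push_cast
  nlinarith [ha, hb]

end GLPrimcodable
section Infra2
open GLPrimcodable

namespace GLPrimcodable

abbrev F44 : Type := Fin 4 → Fin 4 → ℤ

instance matPrimcodable : Primcodable (Matrix (Fin 4) (Fin 4) ℤ) :=
  Primcodable.ofEquiv F44 Matrix.of.symm

/-- Matrix multiplication written out entrywise on `Fin 4 → Fin 4 → ℤ`. -/
def mulF (p : F44 × F44) : F44 := fun i j =>
  p.1 i 0 * p.2 0 j + (p.1 i 1 * p.2 1 j + (p.1 i 2 * p.2 2 j + p.1 i 3 * p.2 3 j))

theorem primrec_mulF : Primrec mulF := by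
  rw [Primrec.fin_curry]
  refine Primrec₂.mk ?_
  rw [Primrec.fin_curry]
  refine Primrec₂.mk ?_
  -- p : ((F44 × F44) × Fin 4) × Fin 4
  have hA : Primrec (fun p : ((F44 × F44) × Fin 4) × Fin 4 => p.1.1.1) :=
    Primrec.fst.comp (Primrec.fst.comp Primrec.fst)
  have hB : Primrec (fun p : ((F44 × F44) × Fin 4) × Fin 4 => p.1.1.2) :=
    Primrec.snd.comp (Primrec.fst.comp Primrec.fst)
  have hi : Primrec (fun p : ((F44 × F44) × Fin 4) × Fin 4 => p.1.2) :=
    Primrec.snd.comp Primrec.fst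
  have hj : Primrec (fun p : ((F44 × F44) × Fin 4) × Fin 4 => p.2) := Primrec.snd
  have hAik : ∀ k : Fin 4, Primrec (fun p : ((F44 × F44) × Fin 4) × Fin 4 => p.1.1.1 p.1.2 k) :=
    fun k => Primrec.fin_app.comp (Primrec.fin_app.comp hA hi) (Primrec.const k)
  have hBkj : ∀ k : Fin 4, Primrec (fun p : ((F44 × F44) × Fin 4) × Fin 4 => p.1.1.2 k p.2) :=
    fun k => Primrec.fin_app.comp (Primrec.fin_app.comp hB (Primrec.const k)) hj
  exact primrec_int_add.comp (primrec_int_mul.comp (hAik 0) (hBkj 0))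
    (primrec_int_add.comp (primrec_int_mul.comp (hAik 1) (hBkj 1))
      (primrec_int_add.comp (primrec_int_mul.comp (hAik 2) (hBkj 2))
        (primrec_int_mul.comp (hAik 3) (hBkj 3))))

theorem primrec_matMul :
    Primrec (fun p : Matrix (Fin 4) (Fin 4) ℤ × Matrix (Fin 4) (Fin 4) ℤ => p.1 * p.2) := by
  rw [← Primrec.of_equiv_iff (Matrix.of.symm : Matrix (Fin 4) (Fin 4) ℤ ≃ F44)]
  have h : Primrec (fun p : Matrix (Fin 4) (Fin 4) ℤ × Matrix (Fin 4) (Fin 4) ℤ =>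
      mulF (Matrix.of.symm p.1, Matrix.of.symm p.2)) :=
    primrec_mulF.comp (Primrec.pair (Primrec.of_equiv.comp Primrec.fst)
      (Primrec.of_equiv.comp Primrec.snd))
  refine h.of_eq ?_
  rintro ⟨A, B⟩
  funext i j
  show mulF (A, B) i j = (A * B) i j
  rw [Matrix.mul_apply, Fin.sum_univ_four, mulF]
  ring

theorem primrecPred_isUnitPair :
    PrimrecPred (fun p : Matrix (Fin 4) (Fin 4) ℤ × Matrix (Fin 4) (Fin 4) ℤ =>
      p.1 * p.2 = 1 ∧ p.2 * p.1 = 1) := by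
  have h1 : PrimrecPred (fun p : Matrix (Fin 4) (Fin 4) ℤ × Matrix (Fin 4) (Fin 4) ℤ =>
      p.1 * p.2 = 1) :=
    PrimrecRel.comp Primrec.eq primrec_matMul (Primrec.const 1)
  have h2 : PrimrecPred (fun p : Matrix (Fin 4) (Fin 4) ℤ × Matrix (Fin 4) (Fin 4) ℤ =>
      p.2 * p.1 = 1) :=
    PrimrecRel.comp Primrec.eq
      (primrec_matMul.comp (Primrec.pair Primrec.snd Primrec.fst)) (Primrec.const 1)
  exact h1.and h2

instance glPrimcodable : Primcodable (Matrix.GeneralLinearGroup (Fin 4) ℤ) :=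
  letI : Primcodable {p : Matrix (Fin 4) (Fin 4) ℤ × Matrix (Fin 4) (Fin 4) ℤ //
      p.1 * p.2 = 1 ∧ p.2 * p.1 = 1} := Primcodable.subtype primrecPred_isUnitPair
  Primcodable.ofEquiv _ (unitsEquivProdSubtype (Matrix (Fin 4) (Fin 4) ℤ))

end GLPrimcodable
end Infra2


namespace GLUndec
section Model

abbrev Sp (Γ : Type) : Type := Γ × (Γ →₀ ZMod 2) × (Γ → ZMod 2)

variable {Γ Λ : Type} [AddCommGroup Γ] [AddCommGroup Λ]

noncomputable def lampSum (c : Γ → ZMod 2) (p : Γ) : (Γ →₀ ZMod 2) →+ ZMod 2 :=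
  Finsupp.liftAddHom (fun d => AddMonoidHom.mulRight (c (d + p)))

noncomputable def color (c : Γ → ZMod 2) (s : Sp Γ) : ZMod 2 :=
  lampSum c s.1 s.2.1 + s.2.2 s.1

theorem lampSum_single (c : Γ → ZMod 2) (p e : Γ) (a : ZMod 2) :
    lampSum c p (Finsupp.single e a) = a * c (e + p) := by
  simp [lampSum]

theorem lampSum_mapDomain (c : Γ → ZMod 2) (p : Γ) (j : Λ → Γ) (c' : Λ → ZMod 2) (u : Λ)
    (h : ∀ v, c (j v + p) = c' (v + u)) (ζ : Λ →₀ ZMod 2) :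
    lampSum c p (ζ.mapDomain j) = lampSum c' u ζ := by
  induction ζ using Finsupp.induction_linear with
  | zero => simp
  | add f g hf hg => rw [Finsupp.mapDomain_add, map_add, map_add, hf, hg]
  | single a b => rw [Finsupp.mapDomain_single, lampSum_single, lampSum_single, h]

theorem exists_equiv_fiber {R H W : Type} [Infinite W] (h : R → H) (hs : Function.Surjective h)
    (hle : Cardinal.mk R ≤ Cardinal.mk W) :
    ∃ e : R × W ≃ H × W, ∀ x, (e x).1 = h x.1 := by
  have key : ∀ y : H, Nonempty ({r // h r = y} × W ≃ W) := by
    intro y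
    rw [← Cardinal.eq, Cardinal.mk_prod, Cardinal.lift_id, Cardinal.lift_id]
    apply Cardinal.mul_eq_right (Cardinal.aleph0_le_mk W)
    · exact (Cardinal.mk_subtype_le _).trans hle
    · obtain ⟨r, hr⟩ := hs y
      rw [Cardinal.mk_ne_zero_iff]
      exact ⟨⟨r, hr⟩⟩
  let k := fun y => (key y).some
  refine ⟨{ toFun := fun x => (h x.1, k (h x.1) (⟨x.1, rfl⟩, x.2))
            invFun := fun y => (((k y.1).symm y.2).1.1, ((k y.1).symm y.2).2)
            left_inv := ?_, right_inv := ?_ }, fun x => rfl⟩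
  · rintro ⟨r, w⟩
    simp
  · rintro ⟨y, w⟩
    have : ∀ x : {r // h r = y} × W,
        (h x.1.1, k (h x.1.1) (⟨x.1.1, rfl⟩, x.2)) = (y, k y x) := by
      rintro ⟨⟨r, rfl⟩, w⟩
      rfl
    exact (this ((k y).symm w)).trans (by simp)

theorem exists_retr (α : Λ →+ Γ) (hα : Function.Injective α) :
    ∃ u : Γ → Λ, ∀ v p, u (α v + p) = v + u p := by
  have h : ∀ p : Γ, ∃ v : Λ, α v = p - (QuotientAddGroup.mk (s := α.range) p).out := by
    intro p
    have : (QuotientAddGroup.mk (s := α.range) p).out - p ∈ α.range := by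
      have := QuotientAddGroup.mk_out_eq_add α.range p
      obtain ⟨⟨g, hg⟩, h⟩ := this
      rw [h]; simpa using hg
    obtain ⟨v, hv⟩ := this
    exact ⟨-v, by rw [map_neg, hv]; abel⟩
  choose u hu using h
  refine ⟨u, fun v p => hα ?_⟩
  have : (QuotientAddGroup.mk (s := α.range) (α v + p)) = QuotientAddGroup.mk p := by
    rw [QuotientAddGroup.eq]
    exact ⟨-v, by rw [map_neg]; abel⟩
  rw [map_add, hu, hu, this]; abel

def shift (v : Γ) : Equiv.Perm (Sp Γ) where
  toFun s := (v + s.1, s.2)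
  invFun s := (-v + s.1, s.2)
  left_inv s := by simp
  right_inv s := by simp

noncomputable def tog (e : Γ) : Equiv.Perm (Sp Γ) where
  toFun s := (s.1, s.2.1 + Finsupp.single (e - s.1) 1, s.2.2)
  invFun s := (s.1, s.2.1 - Finsupp.single (e - s.1) 1, s.2.2)
  left_inv s := by simp
  right_inv s := by simp

theorem color_tog (c : Γ → ZMod 2) (e : Γ) (s : Sp Γ) : color c (tog e s) = color c s + c e := by
  simp [color, tog, lampSum_single]; abel

theorem exists_split (α : Λ →+ Γ) (hα : Function.Injective α) (γ : Γ) (c : Γ → ZMod 2)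
    (W : Type) [Infinite W] (hW : Cardinal.mk (Sp Γ) ≤ Cardinal.mk W) :
    ∃ e : Sp Γ × W ≃ Sp Λ × W,
      (∀ x, color (fun v => c (γ + α v)) (e x).1 = color c x.1) ∧
      (∀ v x, e (shift (α v) x.1, x.2) = (shift v (e x).1, (e x).2)) ∧
      (∀ x, e (tog γ x.1, x.2) = (tog 0 (e x).1, (e x).2)) := by
  classical
  obtain ⟨u, hu⟩ := exists_retr α hα
  have jinj : ∀ p0 : Γ, Function.Injective (fun v : Λ => γ - p0 + α v) := by
    intro p0 a b h
    exact hα (by simpa using h)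
  let R := {s : Sp Γ // u s.1 = 0 ∧ ∀ v, s.2.1 (γ - s.1 + α v) = 0}
  have hu' : ∀ p, u (p - α (u p)) = 0 := by
    intro p
    have := hu (-(u p)) p
    rw [map_neg, neg_add_cancel] at this
    rw [← this]; congr 1; abel
  have hu'' : ∀ p v, u p = 0 → u (p + α v) = v := by
    intro p v h
    rw [add_comm, hu, h, add_zero]
  let base : Sp Γ → Γ := fun s => s.1 - α (u s.1)
  let zet : Sp Γ → (Λ →₀ ZMod 2) := fun s =>
    s.2.1.comapDomain (fun v : Λ => γ - base s + α v) (jinj _).injOn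
  let rr : Sp Γ → R := fun s => ⟨(base s, s.2.1 - (zet s).mapDomain (fun v : Λ => γ - base s + α v),
    s.2.2), hu' _, fun v => by
      have := Finsupp.mapDomain_apply (jinj (base s)) (zet s) v
      simp only [Finsupp.sub_apply, this]
      simp [zet]⟩
  let e1 : Sp Γ ≃ (Λ × (Λ →₀ ZMod 2)) × R :=
    { toFun := fun s => ((u s.1, zet s), rr s)
      invFun := fun y => (y.2.1.1 + α y.1.1,
        y.2.1.2.1 + y.1.2.mapDomain (fun v : Λ => γ - y.2.1.1 + α v), y.2.1.2.2)
      left_inv := by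
        rintro ⟨p, η, f⟩
        simp [rr, base]
      right_inv := by
        rintro ⟨⟨v, ζ⟩, ⟨⟨p, η, f⟩, hp, hη⟩⟩
        have h1 : u (p + α v) = v := hu'' p v hp
        have hb : ∀ x, base (p + α v, x) = p := by
          intro x; simp [base, h1]
        have hz : zet (p + α v, η + ζ.mapDomain (fun v : Λ => γ - p + α v), f) = ζ := by
          ext w
          simp only [zet, Finsupp.comapDomain_apply, hb, Finsupp.add_apply]
          rw [Finsupp.mapDomain_apply (jinj p) ζ w, hη, zero_add]
        refine Prod.ext (Prod.ext h1 hz) (Subtype.ext ?_)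
        simp only [rr, hz, hb]
        simp }
  let hh : R → (Λ → ZMod 2) := fun r v => color c (shift (α v) r.1)
  have hs : Function.Surjective hh := by
    intro h
    refine ⟨⟨(0 - α (u 0), 0, fun g => h (u g)), hu' 0, fun v => rfl⟩, ?_⟩
    funext v
    simp only [hh, color, shift, Equiv.coe_fn_mk, map_zero, zero_add]
    rw [hu, hu', add_zero]
  obtain ⟨k, hk⟩ := exists_equiv_fiber (W := W) hh hs ((Cardinal.mk_subtype_le _).trans hW)
  let e : Sp Γ × W ≃ Sp Λ × W :=
    { toFun := fun x => ((u x.1.1, zet x.1, (k (rr x.1, x.2)).1), (k (rr x.1, x.2)).2)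
      invFun := fun y => (e1.symm ((y.1.1, y.1.2.1), (k.symm (y.1.2.2, y.2)).1),
        (k.symm (y.1.2.2, y.2)).2)
      left_inv := by
        rintro ⟨s, w⟩
        have : e1.symm ((u s.1, zet s), rr s) = s := e1.left_inv s
        simp [this]
      right_inv := by
        rintro ⟨⟨v, ζ, h⟩, w⟩
        have := fun r => e1.right_inv ((v, ζ), r)
        have h1 := fun r => congrArg (fun x => x.1.1) (this r)
        have h2 := fun r => congrArg (fun x => x.1.2) (this r)
        have h3 := fun r => congrArg (fun x => x.2) (this r)
        change ∀ r, u (e1.symm ((v, ζ), r)).1 = v at h1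
        change ∀ r, zet (e1.symm ((v, ζ), r)) = ζ at h2
        change ∀ r, rr (e1.symm ((v, ζ), r)) = r at h3
        simp [h1, h2, h3] }
  have hbs : ∀ v (s : Sp Γ), base (shift (α v) s) = base s := by
    intro v s
    simp only [base, shift, Equiv.coe_fn_mk, hu, map_add]; abel
  have hzs : ∀ v (s : Sp Γ), zet (shift (α v) s) = zet s := by
    intro v s
    simp only [zet, hbs]; rfl
  have hrs : ∀ v (s : Sp Γ), rr (shift (α v) s) = rr s := by
    intro v s
    refine Subtype.ext ?_
    simp only [rr, hbs, hzs]; rfl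
  have hbt : ∀ (s : Sp Γ), base (tog γ s) = base s := fun s => rfl
  have hzt : ∀ (s : Sp Γ), zet (tog γ s) = zet s + Finsupp.single (- u s.1) 1 := by
    intro s
    ext v
    simp only [zet, Finsupp.comapDomain_apply, tog, Equiv.coe_fn_mk, Finsupp.add_apply]
    congr 1
    rw [Finsupp.single_apply, Finsupp.single_apply]
    congr 1
    simp only [base, eq_iff_iff]
    constructor
    · intro h
      apply hα
      rw [map_neg]
      have h2 : γ - s.1 - (γ - (s.1 - α (u s.1))) = α v := by rw [h]; abel
      rw [← h2]; abel
    · rintro rfl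
      rw [map_neg]; abel
  have hrt : ∀ (s : Sp Γ), rr (tog γ s) = rr s := by
    intro s
    refine Subtype.ext ?_
    simp only [rr, hbt, hzt, Finsupp.mapDomain_add, Finsupp.mapDomain_single]
    have : γ - base s + α (-u s.1) = γ - s.1 := by simp only [base, map_neg]; abel
    rw [this]
    simp [tog]
  refine ⟨e, ?_, ?_, ?_⟩
  · rintro ⟨s, w⟩
    change lampSum _ (u s.1) (zet s) + (k (rr s, w)).1 (u s.1) = _
    rw [hk]
    change _ + color c (shift (α (u s.1)) (rr s).1) = _
    have h1 := lampSum_mapDomain c s.1 (fun v : Λ => γ - base s + α v)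
      (fun v => c (γ + α v)) (u s.1) (fun v => by
        congr 1; simp only [base, map_add]; abel) (zet s)
    rw [← h1]
    simp only [color, shift, Equiv.coe_fn_mk, rr]
    have h2 : α (u s.1) + base s = s.1 := by simp only [base]; abel
    rw [h2, ← add_assoc, ← map_add]
    congr 3
    abel
  · rintro v ⟨s, w⟩
    change ((u (shift (α v) s).1, zet (shift (α v) s), (k (rr (shift (α v) s), w)).1),
      (k (rr (shift (α v) s), w)).2) = _
    rw [hzs, hrs]
    change ((u (α v + s.1), _), _) = _
    rw [hu]
    rfl
  · rintro ⟨s, w⟩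
    change ((u (tog γ s).1, zet (tog γ s), (k (rr (tog γ s), w)).1),
      (k (rr (tog γ s), w)).2) = _
    rw [hzt, hrt]
    simp only [tog, e, Equiv.coe_fn_mk, zero_sub]


theorem zmod2_cases (a : ZMod 2) : a = 0 ∨ a = 1 := by
  revert a; decide

/-- extend a permutation of `Sp Γ` to the big set -/
def big {S W : Type} (f : Equiv.Perm S) : Equiv.Perm ((S × W) × ZMod 2) :=
  Equiv.prodCongr (Equiv.prodCongr f (Equiv.refl W)) (Equiv.refl _)

theorem exists_model {I : Type} (α β : I → Λ →+ Γ) (hα : ∀ i, Function.Injective (α i))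
    (hβ : ∀ i, Function.Injective (β i)) (a b : I → Γ) (c : Γ → ZMod 2)
    (hc : ∀ i v, c (a i + α i v) = c (b i + β i v)) :
    ∃ (P : Type) (_ : Group P) (X : Γ → P) (t q z : P) (r : I → P),
      z ≠ 1 ∧ z * z = 1 ∧ (∀ g, g * z = z * g) ∧
      (∀ v w, X (v + w) = X v * X w) ∧
      (∀ i v, r i * X (α i v) = X (β i v) * r i) ∧
      (∀ i, r i * (X (a i) * t * (X (a i))⁻¹) = (X (b i) * t * (X (b i))⁻¹) * r i) ∧
      (∀ i, q * r i = r i * q) ∧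
      (∀ e, c e = 0 → q * (X e * t * (X e)⁻¹) = (X e * t * (X e)⁻¹) * q) ∧
      (∀ e, c e = 1 → q * (X e * t * (X e)⁻¹) = (X e * t * (X e)⁻¹) * q * z) := by
  classical
  let W := Sp Γ × ℕ
  have hW : Cardinal.mk (Sp Γ) ≤ Cardinal.mk W :=
    Cardinal.mk_le_of_injective (f := fun s => (s, 0)) (fun s t h => congrArg Prod.fst h)
  let B := (Sp Γ × W) × ZMod 2
  choose ea ea1 ea2 ea3 using fun i => exists_split (α i) (hα i) (a i) c W hW
  choose eb eb1 eb2 eb3 using fun i => exists_split (β i) (hβ i) (b i) c W hW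
  let z : Equiv.Perm B := Equiv.prodCongr (Equiv.refl _) (Equiv.addRight 1)
  let q : Equiv.Perm B :=
    { toFun := fun x => (x.1, x.2 + color c x.1.1)
      invFun := fun x => (x.1, x.2 - color c x.1.1)
      left_inv := fun x => by simp
      right_inv := fun x => by simp }
  let X : Γ → Equiv.Perm B := fun v => big (shift v)
  let t : Equiv.Perm B := big (tog 0)
  let r : I → Equiv.Perm B := fun i =>
    Equiv.prodCongr ((ea i).trans (eb i).symm) (Equiv.refl _)
  have hz : ∀ x : B, z x = (x.1, x.2 + 1) := fun x => rfl
  have hq : ∀ x : B, q x = (x.1, x.2 + color c x.1.1) := fun x => rfl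
  have hX : ∀ v (x : B), X v x = ((shift v x.1.1, x.1.2), x.2) := fun v x => rfl
  have hr : ∀ i (x : B), r i x = ((eb i).symm (ea i x.1), x.2) := fun v x => rfl
  have hXadd : ∀ v w, X (v + w) = X v * X w := by
    intro v w
    ext x : 1
    simp [hX, shift, add_assoc]
  have hT : ∀ e, X e * t * (X e)⁻¹ = big (tog e) := by
    intro e
    rw [mul_inv_eq_iff_eq_mul]
    ext x : 1
    have key : e - (e + x.1.1.1) = 0 - x.1.1.1 := by abel
    change (((e + x.1.1.1, x.1.1.2.1 + Finsupp.single (0 - x.1.1.1) 1, x.1.1.2.2), x.1.2), x.2)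
      = (((e + x.1.1.1, x.1.1.2.1 + Finsupp.single (e - (e + x.1.1.1)) 1, x.1.1.2.2), x.1.2), x.2)
    rw [key]
  have hTx : ∀ e (x : B), (X e * t * (X e)⁻¹) x = ((tog e x.1.1, x.1.2), x.2) := by
    intro e x; rw [hT]; rfl
  have hcr : ∀ i (x : Sp Γ × W), color c ((eb i).symm (ea i x)).1 = color c x.1 := by
    intro i x
    rw [← eb1, Equiv.apply_symm_apply, ← ea1]
    congr 1
    funext v
    exact (hc i v).symm
  have zX : ∀ v, X v * z = z * X v := fun v => by ext x : 1; simp [hX, hz]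
  have zt : t * z = z * t := by ext x : 1; rfl
  have zq : q * z = z * q := by ext x : 1; simp [hq, hz, add_right_comm]
  have zr : ∀ i, r i * z = z * r i := fun i => by ext x : 1; simp [hr, hz]
  let P := Subgroup.centralizer ({z} : Set (Equiv.Perm B))
  have mem : ∀ g, g * z = z * g → g ∈ P := by
    intro g hg
    rw [Subgroup.mem_centralizer_singleton_iff]
    exact hg
  have two : (1 : ZMod 2) + 1 = 0 := rfl
  refine ⟨P, inferInstance, fun v => ⟨X v, mem _ (zX v)⟩, ⟨t, mem _ zt⟩, ⟨q, mem _ zq⟩,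
    ⟨z, mem _ rfl⟩, fun i => ⟨r i, mem _ (zr i)⟩, ?_, ?_, ?_, ?_, ?_, ?_, ?_, ?_, ?_⟩
  · intro h
    have h1 : z = 1 := congrArg Subtype.val h
    have h2 := congrArg (fun g : Equiv.Perm B => (g (((0, 0, 0), ((0, 0, 0), 0)), 0)).2) h1
    simp [hz] at h2
  · refine Subtype.ext ?_
    change z * z = 1
    ext x : 1
    simp [hz, add_assoc, two]
  · rintro ⟨g, hg⟩
    refine Subtype.ext ?_
    exact (Subgroup.mem_centralizer_singleton_iff.1 hg)
  · intro v w
    exact Subtype.ext (hXadd v w)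
  · intro i v
    refine Subtype.ext ?_
    change r i * X (α i v) = X (β i v) * r i
    ext x : 1
    simp only [Equiv.Perm.mul_apply, hX, hr]
    refine Prod.ext ?_ rfl
    simp only
    rw [Equiv.symm_apply_eq, ea2 i v x.1]
    have := eb2 i v ((eb i).symm (ea i x.1))
    rw [this, Equiv.apply_symm_apply]
  · intro i
    refine Subtype.ext ?_
    change r i * (X (a i) * t * (X (a i))⁻¹) = (X (b i) * t * (X (b i))⁻¹) * r i
    ext x : 1
    change r i ((X (a i) * t * (X (a i))⁻¹) x) = (X (b i) * t * (X (b i))⁻¹) (r i x)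
    rw [hTx, hTx, hr, hr]
    refine Prod.ext ?_ rfl
    simp only
    rw [Equiv.symm_apply_eq, ea3 i x.1]
    have := eb3 i ((eb i).symm (ea i x.1))
    rw [this, Equiv.apply_symm_apply]
  · intro i
    refine Subtype.ext ?_
    change q * r i = r i * q
    ext x : 1
    simp only [Equiv.Perm.mul_apply, hr, hq, hcr]
  · intro e he
    refine Subtype.ext ?_
    change q * (X e * t * (X e)⁻¹) = (X e * t * (X e)⁻¹) * q
    ext x : 1
    change q ((X e * t * (X e)⁻¹) x) = (X e * t * (X e)⁻¹) (q x)
    rw [hTx, hTx, hq, hq]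
    simp only [color_tog, he, add_zero]
  · intro e he
    refine Subtype.ext ?_
    change q * (X e * t * (X e)⁻¹) = (X e * t * (X e)⁻¹) * q * z
    ext x : 1
    change q ((X e * t * (X e)⁻¹) x) = (X e * t * (X e)⁻¹) (q (z x))
    rw [hTx, hTx, hq, hq, hz]
    simp only [color_tog, he]
    refine Prod.ext rfl ?_
    simp only
    abel

end Model

section PingPong

abbrev M2 := Matrix (Fin 2) (Fin 2) ℤ

/-- The hyperbolic generators. -/
def hyp (i : ℤ) : M2ˣ where
  val := !![6*i+3, -((6*i+3)*(6*i)) - 1; 1, -(6*i)]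
  inv := !![-(6*i), (6*i+3)*(6*i) + 1; -1, 6*i+3]
  val_inv := by
    ext a b; fin_cases a <;> fin_cases b <;> simp [Matrix.mul_apply, Fin.sum_univ_two] <;> ring
  inv_val := by
    ext a b; fin_cases a <;> fin_cases b <;> simp [Matrix.mul_apply, Fin.sum_univ_two] <;> ring

abbrev NZ := {v : Fin 2 → ℤ // v ≠ 0}

instance nzAction : MulAction M2ˣ NZ where
  smul g v := ⟨(g : M2).mulVec v.1, fun h => v.2 (by
    have := congrArg ((g⁻¹ : M2ˣ) : M2).mulVec h
    rw [Matrix.mulVec_mulVec, Units.inv_mul, Matrix.one_mulVec, Matrix.mulVec_zero] at this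
    exact this)⟩
  one_smul v := Subtype.ext (by change ((1 : M2ˣ) : M2).mulVec v.1 = v.1; simp)
  mul_smul g h v := Subtype.ext (by
    change ((g * h : M2ˣ) : M2).mulVec v.1 = (g : M2).mulVec ((h : M2).mulVec v.1)
    rw [Matrix.mulVec_mulVec, Units.val_mul])

theorem nz_smul (g : M2ˣ) (v : NZ) : (g • v).1 = (g : M2).mulVec v.1 := rfl

def setX (i : ℤ) : Set NZ := {v | |v.1 0 - (6*i+3) * v.1 1| ≤ |v.1 1|}
def setY (i : ℤ) : Set NZ := {v | |v.1 0 - (6*i) * v.1 1| < |v.1 1|}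

theorem nz_snd {v : NZ} {k : ℤ} (h : |v.1 0 - k * v.1 1| ≤ |v.1 1|) : v.1 1 ≠ 0 := by
  intro h1
  apply v.2
  rw [h1] at h
  have h0 : v.1 0 = 0 := by simpa using h
  funext a; fin_cases a
  · exact h0
  · exact h1

theorem close_eq {x y k l : ℤ} (hy : y ≠ 0) (h1 : |x - k * y| ≤ |y|) (h2 : |x - l * y| ≤ |y|) :
    |k - l| ≤ 2 := by
  have h3 : |(k - l) * y| ≤ 2 * |y| := by
    have : (k - l) * y = (x - l * y) - (x - k * y) := by ring
    rw [this]
    calc _ ≤ |x - l * y| + |x - k * y| := abs_sub _ _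
      _ ≤ _ := by linarith
  rw [abs_mul] at h3
  exact le_of_mul_le_mul_right h3 (abs_pos.2 hy)

theorem hyp_free {Gen : Type} [Nontrivial Gen] (idx : Gen → ℤ) (hidx : Function.Injective idx) :
    Function.Injective (FreeGroup.lift fun g => hyp (idx g)) := by
  refine FreeGroup.injective_lift_of_ping_pong (α := NZ) (fun g => hyp (idx g))
    (fun g => setX (idx g)) (fun g => setY (idx g)) ?_ ?_ ?_ ?_ ?_ ?_
  · intro g
    refine ⟨⟨![6 * idx g + 3, 1], fun h => ?_⟩, ?_⟩
    · have := congrFun h 1; simp at this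
    · simp [setX]
  · intro g h hgh
    rw [Function.onFun, Set.disjoint_left]
    intro v h1 h2
    apply hgh; apply hidx
    have := close_eq (nz_snd h1) h1 h2
    rw [abs_le] at this; omega
  · intro g h hgh
    rw [Function.onFun, Set.disjoint_left]
    intro v h1 h2
    apply hgh; apply hidx
    have := close_eq (nz_snd (le_of_lt h1)) (le_of_lt h1) (le_of_lt h2)
    rw [abs_le] at this; omega
  · intro g h
    rw [Set.disjoint_left]
    intro v h1 h2
    have := close_eq (nz_snd h1) h1 (le_of_lt h2)
    rw [abs_le] at this; omega
  · rintro g _ ⟨v, hv, rfl⟩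
    replace hv : |v.1 1| ≤ |v.1 0 - (6*(idx g)) * v.1 1| := not_lt.1 (fun h => hv h)
    change |(hyp (idx g) • v).1 0 - (6*(idx g)+3) * (hyp (idx g) • v).1 1| ≤ |(hyp (idx g) • v).1 1|
    simp only [nz_smul, hyp, Matrix.mulVec, dotProduct, Fin.sum_univ_two, Matrix.of_apply,
      Matrix.cons_val_zero, Matrix.cons_val_one, Matrix.cons_val', Matrix.cons_val_fin_one]
    rw [← abs_neg (v.1 1)] at hv
    convert hv using 2 <;> ring
  · rintro g _ ⟨v, hv, rfl⟩
    replace hv : |v.1 1| < |v.1 0 - (6*(idx g)+3) * v.1 1| := not_le.1 (fun h => hv h)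
    change |((hyp (idx g))⁻¹ • v).1 0 - (6*(idx g)) * ((hyp (idx g))⁻¹ • v).1 1| < |((hyp (idx g))⁻¹ • v).1 1|
    simp only [nz_smul, hyp, Units.inv_mk, Matrix.mulVec, dotProduct, Fin.sum_univ_two, Matrix.of_apply,
      Matrix.cons_val_zero, Matrix.cons_val_one, Matrix.cons_val', Matrix.cons_val_fin_one]
    rw [← abs_neg (v.1 0 - _)] at hv
    convert hv using 2 <;> ring

end PingPong

section Assembly

abbrev Γ5 := Fin 5 → ℤ

/-- ordered monomial -/
def Xp {G : Type} [Group G] (x : Fin 5 → G) (v : Γ5) : G :=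
  x 0 ^ v 0 * x 1 ^ v 1 * x 2 ^ v 2 * x 3 ^ v 3 * x 4 ^ v 4

def Tp {G : Type} [Group G] (x : Fin 5 → G) (t : G) (v : Γ5) : G :=
  Xp x v * t * (Xp x v)⁻¹

theorem map_Xp {G H : Type} [Group G] [Group H] (φ : G →* H) (x : Fin 5 → G) (v : Γ5) :
    φ (Xp x v) = Xp (fun j => φ (x j)) v := by
  simp [Xp]

theorem map_Tp {G H : Type} [Group G] [Group H] (φ : G →* H) (x : Fin 5 → G) (t : G) (v : Γ5) :
    φ (Tp x t v) = Tp (fun j => φ (x j)) (φ t) v := by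
  simp [Tp, map_Xp]

theorem Xp_add {G : Type} [Group G] (x : Fin 5 → G) (hx : ∀ i j, Commute (x i) (x j)) (v w : Γ5) :
    Xp x (v + w) = Xp x v * Xp x w := by
  have h : ∀ i j (a b : ℤ), Commute (x i ^ a) (x j ^ b) := fun i j a b =>
    ((hx i j).zpow_left a).zpow_right b
  simp only [Xp, Pi.add_apply, zpow_add]
  rw [Commute.mul_mul_mul_comm (b := x 4 ^ v 4) (d := x 4 ^ w 4),
    Commute.mul_mul_mul_comm (b := x 3 ^ v 3) (d := x 3 ^ w 3),
    Commute.mul_mul_mul_comm (b := x 2 ^ v 2) (d := x 2 ^ w 2),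
    Commute.mul_mul_mul_comm (b := x 1 ^ v 1) (d := x 1 ^ w 1)]
  · exact h _ _ _ _
  · exact (h _ _ _ _).mul_right (h _ _ _ _)
  · exact ((h _ _ _ _).mul_right (h _ _ _ _)).mul_right (h _ _ _ _)
  · exact (((h _ _ _ _).mul_right (h _ _ _ _)).mul_right (h _ _ _ _)).mul_right (h _ _ _ _)

/-- A vector Collatz system. -/
structure VC where
  I : Type
  fin : Finite I
  p : I → Γ5
  d : I → Γ5
  p' : I → Γ5
  d' : I → Γ5
  hp : ∀ i j, p i j ≠ 0
  hp' : ∀ i j, p' i j ≠ 0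
  τ : Γ5

def VC.Step (V : VC) (a b : Γ5) : Prop :=
  ∃ i u, a = V.d i + V.p i * u ∧ b = V.d' i + V.p' i * u

structure VC.Rel (V : VC) {G : Type} [Group G] (x : Fin 5 → G) (t q : G) (r : V.I → G) : Prop where
  xx : ∀ i j, x i * x j = x j * x i
  rx : ∀ i j, r i * x j ^ V.p i j = x j ^ V.p' i j * r i
  rt : ∀ i, r i * Tp x t (V.d i) = Tp x t (V.d' i) * r i
  qr : ∀ i, q * r i = r i * q
  qt : q * Tp x t V.τ = Tp x t V.τ * q

theorem Xp_conj {G : Type} [Group G] (x : Fin 5 → G) (r : G) (p p' : Γ5)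
    (h : ∀ j, r * x j ^ p j = x j ^ p' j * r) (u : Γ5) :
    r * Xp x (p * u) * r⁻¹ = Xp x (p' * u) := by
  have h' : ∀ j, MulAut.conj r (x j ^ (p j * u j)) = x j ^ (p' j * u j) := by
    intro j
    rw [zpow_mul, zpow_mul, map_zpow, MulAut.conj_apply, h, mul_inv_cancel_right]
  rw [← MulAut.conj_apply]
  simp only [Xp, Pi.mul_apply, map_mul, h']

theorem Tp_conj {G : Type} [Group G] (V : VC) {x : Fin 5 → G} {t q : G} {r : V.I → G}
    (h : V.Rel x t q r) (i : V.I) (u : Γ5) :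
    r i * Tp x t (V.d i + V.p i * u) * (r i)⁻¹ = Tp x t (V.d' i + V.p' i * u) := by
  have e : ∀ v w, Tp x t (v + w) = Xp x w * Tp x t v * (Xp x w)⁻¹ := by
    intro v w
    rw [Tp, Tp, add_comm, Xp_add x h.xx]; group
  rw [e, e, ← Xp_conj x (r i) (V.p i) (V.p' i) (h.rx i) u, ← mul_inv_eq_iff_eq_mul.2 (h.rt i)]
  group

theorem Tp_step {G : Type} [Group G] (V : VC) {x : Fin 5 → G} {t q : G} {r : V.I → G}
    (h : V.Rel x t q r) {a b : Γ5} (hs : V.Step a b) :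
    Commute q (Tp x t a) ↔ Commute q (Tp x t b) := by
  obtain ⟨i, u, rfl, rfl⟩ := hs
  rw [← Tp_conj V h i u]
  have hq : MulAut.conj (r i) q = q := by
    rw [MulAut.conj_apply, ← h.qr, mul_inv_cancel_right]
  have := (commute_map_iff (MulAut.conj (r i)).injective (x := q) (y := Tp x t (V.d i + V.p i * u)))
  rw [hq, MulAut.conj_apply] at this
  exact this.symm

theorem Tp_eqv {G : Type} [Group G] (V : VC) {x : Fin 5 → G} {t q : G} {r : V.I → G}
    (h : V.Rel x t q r) {a b : Γ5} (hs : Relation.EqvGen V.Step a b) :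
    Commute q (Tp x t a) ↔ Commute q (Tp x t b) := by
  induction hs with
  | rel a b h1 => exact Tp_step V h h1
  | refl => rfl
  | symm _ _ _ ih => exact ih.symm
  | trans _ _ _ _ _ i1 i2 => exact i1.trans i2

/-- model for non-reachable start -/
theorem VC.model (V : VC) (γ : Γ5) (hγ : ¬ Relation.EqvGen V.Step γ V.τ) :
    ∃ (P : Type) (_ : Group P) (x : Fin 5 → P) (t q z : P) (r : V.I → P), V.Rel x t q r ∧
      z ≠ 1 ∧ z * z = 1 ∧ (∀ g, g * z = z * g) ∧ q * Tp x t γ = Tp x t γ * q * z := by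
  classical
  let mulL : Γ5 → Γ5 →+ Γ5 := fun p => AddMonoidHom.mulLeft p
  have inj : ∀ p : Γ5, (∀ j, p j ≠ 0) → Function.Injective (mulL p) := by
    intro p hp u v h
    funext j
    exact mul_left_cancel₀ (hp j) (congrFun h j)
  let c : Γ5 → ZMod 2 := fun e => if Relation.EqvGen V.Step γ e then 1 else 0
  obtain ⟨P, _, X, t, q, z, r, hz, hzz, hzc, hX, hrX, hrt, hqr, hq0, hq1⟩ :=
    exists_model (I := V.I) (fun i => mulL (V.p i)) (fun i => mulL (V.p' i))
      (fun i => inj _ (V.hp i)) (fun i => inj _ (V.hp' i)) V.d V.d' c (by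
        intro i v
        have hs : V.Step (V.d i + V.p i * v) (V.d' i + V.p' i * v) := ⟨i, v, rfl, rfl⟩
        have : Relation.EqvGen V.Step γ (V.d i + V.p i * v) ↔
            Relation.EqvGen V.Step γ (V.d' i + V.p' i * v) :=
          ⟨fun h => h.trans _ _ _ (.rel _ _ hs), fun h => h.trans _ _ _ (.symm _ _ (.rel _ _ hs))⟩
        simp only [c]
        exact if_congr this rfl rfl)
  let φ : Multiplicative Γ5 →* P := MonoidHom.mk' (fun v => X v.toAdd) (fun v w => hX _ _)
  have hpow : ∀ v (n : ℤ), X v ^ n = X (n • v) := fun v n =>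
    (map_zpow φ (Multiplicative.ofAdd v) n).symm
  let x : Fin 5 → P := fun j => X (Pi.single j 1)
  have hXp : ∀ v, Xp x v = X v := by
    intro v
    simp only [Xp, x, hpow, ← hX]
    congr 1
    funext j
    fin_cases j <;> simp
  have hTp : ∀ v, Tp x t v = X v * t * (X v)⁻¹ := fun v => by rw [Tp, hXp]
  refine ⟨P, _, x, t, q, z, r, ⟨?_, ?_, ?_, hqr, ?_⟩, hz, hzz, hzc, ?_⟩
  · intro i j
    simp only [x]
    rw [← hX, ← hX, add_comm]
  · intro i j
    simp only [x, hpow]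
    have := hrX i (Pi.single j 1)
    convert this using 3
    · funext k; simp [mulL, Pi.single_apply]
      exact ite_congr rfl (fun h => by rw [h]) (fun _ => rfl)
    · funext k; simp [mulL, Pi.single_apply]
      exact ite_congr rfl (fun h => by rw [h]) (fun _ => rfl)
  · intro i; rw [hTp, hTp]; exact hrt i
  · rw [hTp]; exact hq0 _ (if_neg hγ)
  · rw [hTp]; exact hq1 _ (if_pos (.refl _))

end Assembly

section Assembly2

variable (V : VC)

abbrev VC.Gen : Type := Fin 5 ⊕ Bool ⊕ V.I
abbrev VC.F : Type := FreeGroup V.Gen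
def VC.fx (j : Fin 5) : V.F := FreeGroup.of (Sum.inl j)
def VC.ft : V.F := FreeGroup.of (Sum.inr (Sum.inl true))
def VC.fq : V.F := FreeGroup.of (Sum.inr (Sum.inl false))
def VC.fr (i : V.I) : V.F := FreeGroup.of (Sum.inr (Sum.inr i))

/-- index type of relators -/
abbrev VC.RI : Type := (Fin 5 × Fin 5) ⊕ (V.I × Fin 5) ⊕ V.I ⊕ V.I ⊕ Unit

def VC.rel : V.RI → V.F
  | .inl (i, j) => (V.fx i * V.fx j) * (V.fx j * V.fx i)⁻¹
  | .inr (.inl (i, j)) => (V.fr i * V.fx j ^ V.p i j) * (V.fx j ^ V.p' i j * V.fr i)⁻¹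
  | .inr (.inr (.inl i)) =>
      (V.fr i * Tp V.fx V.ft (V.d i)) * (Tp V.fx V.ft (V.d' i) * V.fr i)⁻¹
  | .inr (.inr (.inr (.inl i))) => (V.fq * V.fr i) * (V.fr i * V.fq)⁻¹
  | .inr (.inr (.inr (.inr _))) => (V.fq * Tp V.fx V.ft V.τ) * (Tp V.fx V.ft V.τ * V.fq)⁻¹

def VC.w0 (γ : Γ5) : V.F := (V.fq * Tp V.fx V.ft γ) * (Tp V.fx V.ft γ * V.fq)⁻¹

theorem VC.rel_iff {P : Type} [Group P] (φ : V.F →* P) :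
    (∀ k, φ (V.rel k) = 1) ↔
      V.Rel (fun j => φ (V.fx j)) (φ V.ft) (φ V.fq) (fun i => φ (V.fr i)) := by
  constructor
  · intro h
    refine ⟨fun i j => ?_, fun i j => ?_, fun i => ?_, fun i => ?_, ?_⟩
    · simpa only [VC.rel, map_mul, map_inv, mul_inv_eq_one] using h (.inl (i, j))
    · simpa only [VC.rel, map_mul, map_inv, mul_inv_eq_one, map_zpow] using h (.inr (.inl (i, j)))
    · simpa only [VC.rel, map_mul, map_inv, mul_inv_eq_one, map_Tp] using h (.inr (.inr (.inl i)))
    · simpa only [VC.rel, map_mul, map_inv, mul_inv_eq_one, map_Tp] using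
        h (.inr (.inr (.inr (.inl i))))
    · simpa only [VC.rel, map_mul, map_inv, mul_inv_eq_one, map_Tp] using
        h (.inr (.inr (.inr (.inr ()))))
  · intro h k
    rcases k with ⟨i, j⟩ | ⟨i, j⟩ | i | i | _ <;>
      simp only [VC.rel, map_mul, map_inv, mul_inv_eq_one, map_zpow, map_Tp]
    · exact h.xx i j
    · exact h.rx i j
    · exact h.rt i
    · exact h.qr i
    · exact h.qt

variable {A : Type} [Group A] (f : V.F →* A) (z : A)

def VC.S (γ : Γ5) : Set (A × A) :=
  (Set.range fun g : V.Gen => (f (FreeGroup.of g), f (FreeGroup.of g))) ∪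
    (Set.range fun k => ((1 : A), f (V.rel k))) ∪ {(1, z * f (V.w0 γ))}

theorem VC.diag_mem (γ : Γ5) (w : V.F) : (f w, f w) ∈ Subgroup.closure (V.S f z γ) := by
  have : (f.prod f).range ≤ Subgroup.closure (V.S f z γ) := by
    rw [MonoidHom.range_eq_map, ← FreeGroup.closure_range_of, MonoidHom.map_closure,
      Subgroup.closure_le]
    rintro _ ⟨_, ⟨g, rfl⟩, rfl⟩
    exact Subgroup.subset_closure (Or.inl (Or.inl ⟨g, rfl⟩))
  exact this ⟨w, rfl⟩

theorem VC.thmA (hz : ∀ a, Commute a z) (γ : Γ5) (h : Relation.EqvGen V.Step γ V.τ) :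
    ((1 : A), z) ∈ Subgroup.closure (V.S f z γ) := by
  let F : V.F × Multiplicative ℤ →* A :=
    MonoidHom.noncommCoprod f (zpowersHom A z) (fun m n => by
      rw [zpowersHom_apply]; exact (hz _).zpow_right _)
  have hF : ∀ w e, F (w, e) = f w * z ^ e.toAdd := fun w e => rfl
  let N : Subgroup (V.F × Multiplicative ℤ) :=
    (Subgroup.closure (V.S f z γ)).comap ((MonoidHom.inr A A).comp F)
  have hN : ∀ y, y ∈ N ↔ ((1 : A), F y) ∈ Subgroup.closure (V.S f z γ) := fun y => Iff.rfl
  have : N.Normal := by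
    constructor
    rintro y hy ⟨w, e⟩
    rw [hN] at hy ⊢
    have h1 := V.diag_mem f z γ w
    have h2 := mul_mem (mul_mem h1 hy) (inv_mem h1)
    convert h2 using 1
    have hc : ∀ b : A, z ^ e.toAdd * b = b * z ^ e.toAdd := fun b => ((hz b).zpow_right _).symm
    have e1 : F ((w, e) * y * (w, e)⁻¹) = f w * F y * (f w)⁻¹ := by
      rw [map_mul, map_mul, map_inv, hF, mul_assoc (f w), hc, mul_inv_rev]; group
    rw [e1]
    simp only [Prod.mk_mul_mk, Prod.inv_mk, mul_one, mul_inv_cancel]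
  let φ : V.F →* (V.F × Multiplicative ℤ) ⧸ N := (QuotientGroup.mk' N).comp (MonoidHom.inl _ _)
  have hφ : ∀ w, φ w = QuotientGroup.mk' N (w, 1) := fun w => rfl
  have hrel := (V.rel_iff φ).1 (fun k => by
    rw [hφ, QuotientGroup.mk'_apply, QuotientGroup.eq_one_iff, hN, hF]
    refine Subgroup.subset_closure (Or.inl (Or.inr ⟨k, ?_⟩))
    simp)
  have hq := (Tp_eqv V hrel h).2 hrel.qt
  have hw : φ (V.w0 γ) = 1 := by
    simp only [VC.w0, map_mul, map_inv, map_Tp]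
    rw [mul_inv_eq_one]
    exact hq.eq
  rw [hφ, QuotientGroup.mk'_apply, QuotientGroup.eq_one_iff, hN, hF] at hw
  have h3 : ((1 : A), z * f (V.w0 γ)) ∈ Subgroup.closure (V.S f z γ) :=
    Subgroup.subset_closure (Or.inr rfl)
  have h4 := mul_mem h3 (inv_mem hw)
  simpa using h4

theorem VC.thmB (hf : Function.Injective f) (hz : ∀ a, Commute a z) (hzz : z * z = 1) 
    (γ : Γ5) (h : ¬ Relation.EqvGen V.Step γ V.τ) (y : A × A)
    (hy : y ∈ Subgroup.closure (V.S f z γ)) (hyy : y * y = 1) : y = 1 := by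
  obtain ⟨P, _, x, t, q, ζ, r, hrel, hζ, hζζ, hζc, hq⟩ := V.model γ h
  replace hζc : ∀ a, Commute a ζ := hζc
  let φ : V.F →* P := FreeGroup.lift (Sum.elim x (Sum.elim (fun b => if b then t else q) r))
  have hx : (fun j => φ (V.fx j)) = x := by funext j; simp [φ, VC.fx]
  have ht : φ V.ft = t := by simp [φ, VC.ft]
  have hq' : φ V.fq = q := by simp [φ, VC.fq]
  have hr : (fun j => φ (V.fr j)) = r := by funext j; simp [φ, VC.fr]
  have hφrel : ∀ k, φ (V.rel k) = 1 := by
    rw [V.rel_iff, hx, ht, hq', hr]; exact hrel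
  have hw : φ (V.w0 γ) = ζ := by
    simp only [VC.w0, map_mul, map_inv, map_Tp, hx, ht, hq']
    rw [mul_inv_eq_iff_eq_mul, hq]
    exact (hζc _).eq
  have key : ∃ w w' : V.F, ∃ e : ℤ, y = (f w, f w' * z ^ e) ∧ φ w = φ w' * ζ ^ e := by
    clear hyy
    induction hy using Subgroup.closure_induction with
    | mem y hy =>
      rcases hy with (⟨g, rfl⟩ | ⟨k, rfl⟩) | rfl
      · exact ⟨FreeGroup.of g, FreeGroup.of g, 0, by simp, by simp⟩
      · exact ⟨1, V.rel k, 0, by simp, by simp [hφrel]⟩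
      · exact ⟨1, V.w0 γ, 1, by simp [(hz _).eq], by simp [hw, hζζ]⟩
    | one => exact ⟨1, 1, 0, by simp [Prod.one_eq_mk], by simp⟩
    | mul y y' _ _ h1 h2 =>
      obtain ⟨w, w', e, rfl, h1⟩ := h1
      obtain ⟨v, v', d, rfl, h2⟩ := h2
      refine ⟨w * v, w' * v', e + d, ?_, ?_⟩
      · simp only [Prod.mk_mul_mk, map_mul, zpow_add]
        rw [((hz (f v')).zpow_right e).symm.mul_mul_mul_comm]
      · simp only [map_mul, zpow_add, h1, h2]
        rw [((hζc (φ v')).zpow_right e).symm.mul_mul_mul_comm]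
    | inv y _ h1 =>
      obtain ⟨w, w', e, rfl, h1⟩ := h1
      refine ⟨w⁻¹, w'⁻¹, -e, ?_, ?_⟩
      · simp only [Prod.inv_mk, map_inv, zpow_neg, mul_inv_rev]
        rw [((hz (f w')).zpow_right e).symm.inv_inv.eq]
      · simp only [map_inv, zpow_neg, h1, mul_inv_rev]
        rw [((hζc (φ w')).zpow_right e).symm.inv_inv.eq]
  obtain ⟨w, w', e, rfl, h1⟩ := key
  have tf : ∀ w : V.F, w * w = 1 → w = 1 := by
    intro w hw
    rw [← pow_two] at hw
    exact (pow_eq_one_iff_left (two_ne_zero)).1 hw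
  simp only [Prod.mk_mul_mk, Prod.mk_eq_one] at hyy
  have hw1 : w = 1 := tf w (hf (by simpa using hyy.1))
  have hz2 : z ^ e * z ^ e = 1 := by
    rw [← (Commute.refl z).mul_zpow, hzz, one_zpow]
  have hw2 : w' = 1 := by
    apply tf; apply hf
    have := hyy.2
    rw [((hz (f w')).zpow_right e).symm.mul_mul_mul_comm, hz2, mul_one] at this
    simpa using this
  subst hw1 hw2
  simp only [map_one, one_mul] at h1 ⊢
  rcases Int.even_or_odd' e with ⟨k, rfl | rfl⟩
  · rw [zpow_mul, zpow_ofNat, pow_two, hzz, one_zpow]; rfl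
  · rw [zpow_add, zpow_mul, zpow_ofNat, pow_two, hζζ, one_zpow, one_mul, zpow_one] at h1
    exact absurd h1.symm hζ

end Assembly2

section Machine
open Turing.PartrecToTM2

def dig : Option Γ' → ℤ
  | none => 0
  | some Γ'.consₗ => 1
  | some Γ'.cons => 2
  | some Γ'.bit0 => 3
  | some Γ'.bit1 => 4

def encL : List Γ' → ℤ
  | [] => 0
  | a :: l => dig (some a) + 5 * encL l

theorem dig_mod_inj {a b : Option Γ'} {u v : ℤ} (h : dig a + 5 * u = dig b + 5 * v) : a = b := by
  rcases a with _ | (_ | _ | _ | _) <;> rcases b with _ | (_ | _ | _ | _) <;>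
    first | rfl | (simp only [dig] at h; omega)

theorem encL_head (l : List Γ') : encL l = dig l.head? + 5 * encL l.tail := by
  cases l <;> simp [encL, dig]

theorem encL_append (l m : List Γ') : encL (l ++ m) = encL l + 5 ^ l.length * encL m := by
  induction l with
  | nil => simp [encL]
  | cons a l ih => simp [encL, ih, pow_succ]; ring

theorem encL_inj : ∀ {l m : List Γ'}, encL l = encL m → l = m
  | [], [], _ => rfl
  | [], a :: m, h => by
    have := dig_mod_inj (a := none) (u := 0) (b := some a) (v := encL m)
      (by simpa [encL, dig] using h)
    simp at this
  | a :: m, [], h => by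
    have := dig_mod_inj (a := none) (u := 0) (b := some a) (v := encL m)
      (by simpa [encL, dig] using h.symm)
    simp at this
  | a :: l, b :: m, h => by
    have h1 := dig_mod_inj (a := some a) (b := some b) h
    simp only [Option.some.injEq] at h1
    subst h1
    rw [encL, encL] at h
    rw [encL_inj (show encL l = encL m by linarith)]

def ck : Fin 5 → Option K' := ![none, some K'.main, some K'.rev, some K'.aux, some K'.stack]

theorem ck_zero : ck 0 = none := rfl

def kc : K' → Fin 5
  | K'.main => 1
  | K'.rev => 2
  | K'.aux => 3
  | K'.stack => 4

theorem ck_kc (k : K') : ck (kc k) = some k := by cases k <;> rfl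

variable {Q : Type} [Fintype Q] (stk : Q → K') (nxt : Q → Option Γ' → Q)
  (act : Q → Option Γ' → List Γ')

/-- generic stack machine step -/
def mstep {Q : Type} (stk : Q → K') (nxt : Q → Option Γ' → Q)
  (act : Q → Option Γ' → List Γ') (c : Q × (K' → List Γ')) : Q × (K' → List Γ') :=
  (nxt c.1 (c.2 (stk c.1)).head?,
    Function.update c.2 (stk c.1)
      (act c.1 (c.2 (stk c.1)).head? ++ (c.2 (stk c.1)).tail))

noncomputable def num (s : Q) : ℤ := ((Fintype.equivFin Q s : Fin (Fintype.card Q)) : ℕ)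

theorem num_inj {s t : Q} {u v : ℤ}
    (h : num s + (Fintype.card Q + 1 : ℕ) * u = num t + (Fintype.card Q + 1 : ℕ) * v) : s = t := by
  have h1 : ((num s + (Fintype.card Q + 1 : ℕ) * u) % (Fintype.card Q + 1 : ℕ)) =
     ((num t + (Fintype.card Q + 1 : ℕ) * v) % (Fintype.card Q + 1 : ℕ)) := by rw [h]
  have h2 := (Fintype.equivFin Q s).2
  have h3 := (Fintype.equivFin Q t).2
  rw [Int.add_mul_emod_self_left, Int.add_mul_emod_self_left,
    Int.emod_eq_of_lt (by unfold num; omega) (by unfold num; omega),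
    Int.emod_eq_of_lt (by unfold num; omega) (by unfold num; omega)] at h1
  apply (Fintype.equivFin Q).injective
  apply Fin.ext
  unfold num at h1
  exact_mod_cast h1

noncomputable def enc (c : Q × (K' → List Γ')) : Γ5 :=
  fun j => (ck j).elim (num c.1) (fun k => encL (c.2 k))

theorem enc_inj : Function.Injective (enc (Q := Q)) := by
  rintro ⟨s, S⟩ ⟨t, T⟩ h
  have h0 : num s = num t := congrFun h 0
  have h1 : s = t := num_inj (u := 0) (v := 0) (by simpa using h0)
  have h2 : S = T := by
    funext k
    have := congrFun h (kc k)
    simp only [enc, ck_kc, Option.elim_some] at this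
    exact encL_inj this
  rw [h1, h2]

noncomputable def stackVC (h : Q × (K' → List Γ')) : VC where
  I := Q × Option Γ'
  fin := inferInstance
  p i j := (ck j).elim ((Fintype.card Q + 1 : ℕ) : ℤ) (fun k => if k = stk i.1 then 5 else 1)
  d i j := (ck j).elim (num i.1) (fun k => if k = stk i.1 then dig i.2 else 0)
  p' i j := (ck j).elim ((Fintype.card Q + 1 : ℕ) : ℤ)
    (fun k => if k = stk i.1 then 5 ^ (act i.1 i.2).length else 1)
  d' i j := (ck j).elim (num (nxt i.1 i.2)) (fun k => if k = stk i.1 then encL (act i.1 i.2) else 0)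
  hp i j := by
    rcases ck j with _ | k
    · simp only [Option.elim_none]; omega
    · simp only [Option.elim_some]; split_ifs <;> simp
  hp' i j := by
    rcases ck j with _ | k
    · simp only [Option.elim_none]; omega
    · simp only [Option.elim_some]; split_ifs <;> simp
  τ := enc h

theorem stack_step (h c : Q × (K' → List Γ')) :
    (stackVC stk nxt act h).Step (enc c) (enc (mstep stk nxt act c)) := by
  refine ⟨(c.1, (c.2 (stk c.1)).head?), fun j => (ck j).elim 0 (fun k =>
    if k = stk c.1 then encL (c.2 k).tail else encL (c.2 k)), ?_, ?_⟩
  · funext j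
    simp only [enc, stackVC, Pi.add_apply, Pi.mul_apply]
    rcases ck j with _ | k
    · simp
    · simp only [Option.elim_some]
      split_ifs with hk
      · subst hk; exact encL_head _
      · simp
  · funext j
    simp only [enc, stackVC, mstep, Pi.add_apply, Pi.mul_apply]
    rcases ck j with _ | k
    · simp
    · simp only [Option.elim_some]
      split_ifs with hk
      · subst hk; rw [Function.update_self, encL_append]
      · rw [Function.update_of_ne hk]; simp

theorem stack_det (h : Q × (K' → List Γ')) {a b c : Γ5}
    (hb : (stackVC stk nxt act h).Step a b) (hc : (stackVC stk nxt act h).Step a c) : b = c := by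
  obtain ⟨⟨s, δ⟩, u, rfl, rfl⟩ := hb
  obtain ⟨⟨t, ε⟩, v, h1, rfl⟩ := hc
  have hst : s = t := num_inj (congrFun h1 0)
  subst hst
  have hd : δ = ε := by
    have := congrFun h1 (kc (stk s))
    simp only [stackVC, Pi.add_apply, Pi.mul_apply, ck_kc, Option.elim_some, if_true] at this
    exact dig_mod_inj this
  subst hd
  have huv : u = v := by
    funext j
    have := congrFun h1 j
    rw [Pi.add_apply, Pi.add_apply] at this
    exact mul_left_cancel₀ ((stackVC stk nxt act h).hp (s, δ) j) (add_left_cancel this)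
  rw [huv]

theorem stack_iff (h c : Q × (K' → List Γ')) (hh : mstep stk nxt act h = h) :
    Relation.EqvGen (stackVC stk nxt act h).Step (enc c) (stackVC stk nxt act h).τ ↔
      ∃ n, (mstep stk nxt act)^[n] c = h := by
  set V := stackVC stk nxt act h with hV
  have τe : V.τ = enc h := rfl
  constructor
  · intro hE
    have conf : ∀ a b c, V.Step a b → V.Step a c →
        ∃ d, Relation.ReflGen V.Step b d ∧ Relation.ReflTransGen V.Step c d := by
      intro a b c hb hc
      rw [stack_det stk nxt act h hb hc]
      exact ⟨c, .refl, .refl⟩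
    have hj : Relation.Join (Relation.ReflTransGen V.Step) (enc c) V.τ := by
      have heq := Relation.equivalence_join_reflTransGen conf
      generalize enc c = a0, V.τ = b0 at hE ⊢
      induction hE with
      | rel a b h1 => exact ⟨b, .single h1, .refl⟩
      | refl a => exact heq.refl a
      | symm _ _ _ ih => exact heq.symm ih
      | trans _ _ _ _ _ i1 i2 => exact heq.trans i1 i2
    obtain ⟨d, h1, h2⟩ := hj
    have hτ : ∀ d, Relation.ReflTransGen V.Step V.τ d → d = V.τ := by
      intro d hd
      induction hd with
      | refl => rfl
      | tail _ h1 ih =>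
        rw [ih] at h1
        have h3 := stack_step stk nxt act h h
        rw [hh] at h3
        exact stack_det stk nxt act h h1 h3
    rw [hτ d h2] at h1
    have hfw : ∀ d, Relation.ReflTransGen V.Step (enc c) d →
        ∃ n, d = enc ((mstep stk nxt act)^[n] c) := by
      intro d hd
      induction hd with
      | refl => exact ⟨0, rfl⟩
      | tail _ h1 ih =>
        obtain ⟨n, rfl⟩ := ih
        refine ⟨n + 1, ?_⟩
        rw [Function.iterate_succ_apply']
        exact stack_det stk nxt act h h1 (stack_step stk nxt act h _)
    obtain ⟨n, hn⟩ := hfw _ h1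
    exact ⟨n, (enc_inj (τe ▸ hn)).symm⟩
  · rintro ⟨n, rfl⟩
    clear hh
    rw [τe]
    have : ∀ n, Relation.EqvGen V.Step (enc c) (enc ((mstep stk nxt act)^[n] c)) := by
      intro n
      induction n with
      | zero => exact .refl _
      | succ n ih =>
        rw [Function.iterate_succ_apply']
        exact .trans _ _ _ ih (.rel _ _ (stack_step stk nxt act _ _))
    exact this n

end Machine

section Input
open Turing.PartrecToTM2

def inN (n : ℕ) : ℕ := if h : n = 0 then 2 else 5 * inN (n / 2) + (3 + n % 2)
termination_by n
decreasing_by omega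

theorem inN_zero : inN 0 = 2 := by rw [inN, dif_pos rfl]

theorem primrec_inN : Primrec inN := by
  have h : Primrec₂ (fun (_ : Unit) n => inN n) := by
    refine Primrec.nat_strong_rec _ (g := fun _ l => if l.length = 0 then some 2 else
      (l[l.length / 2]?).map (fun x => 5 * x + (3 + l.length % 2))) ?_ ?_
    · have hlen : Primrec (fun p : Unit × List ℕ => p.2.length) :=
        Primrec.list_length.comp Primrec.snd
      refine Primrec.ite (PrimrecRel.comp Primrec.eq hlen (Primrec.const 0)) (Primrec.const _) ?_
      refine Primrec.option_map (Primrec.list_getElem?.comp Primrec.snd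
        (Primrec.nat_div.comp hlen (Primrec.const 2))) ?_
      exact Primrec.nat_add.comp (Primrec.nat_mul.comp (Primrec.const 5) Primrec.snd)
        (Primrec.nat_add.comp (Primrec.const 3)
          (Primrec.nat_mod.comp (hlen.comp Primrec.fst) (Primrec.const 2)))
    · intro _ n
      rcases Nat.eq_zero_or_pos n with rfl | hn
      · simp [inN_zero]
      · have h2 : n / 2 < n := by omega
        simp only [List.length_map, List.length_range]
        rw [if_neg (by omega), List.getElem?_map, List.getElem?_range h2]
        conv_rhs => rw [inN, dif_neg (by omega)]
        rfl
  exact h.comp (Primrec.const ()) Primrec.id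

theorem encL_trPosNum (p : PosNum) : encL (trPosNum p ++ [Γ'.cons]) = inN (p : ℕ) := by
  induction p with
  | one =>
    change encL [Γ'.bit1, Γ'.cons] = ((inN 1 : ℕ) : ℤ)
    rw [inN, dif_neg one_ne_zero]
    norm_num [encL, dig, inN_zero]
  | bit0 p ih =>
    have hp := PosNum.to_nat_pos p
    rw [PosNum.cast_bit0, inN, dif_neg (by omega), trPosNum, List.cons_append, encL, ih]
    have e1 : ((p : ℕ) + p) / 2 = p := by omega
    have e2 : ((p : ℕ) + p) % 2 = 0 := by omega
    rw [e1, e2]; push_cast; simp [dig]; ring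
  | bit1 p ih =>
    have hp := PosNum.to_nat_pos p
    rw [PosNum.cast_bit1, inN, dif_neg (by omega), trPosNum, List.cons_append, encL, ih]
    have e1 : ((p : ℕ) + p + 1) / 2 = p := by omega
    have e2 : ((p : ℕ) + p + 1) % 2 = 1 := by omega
    rw [e1, e2]; push_cast; simp [dig]; ring

theorem encL_trList (n : ℕ) : encL (trList [n]) = inN n := by
  simp only [trList, trNat]
  have h := Num.to_of_nat n
  generalize (n : Num) = m at h ⊢
  subst h
  rcases m with _ | p
  · simp [trNum, encL, dig, inN_zero]
  · exact encL_trPosNum p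

end Input

section Machine2
open Turing Turing.PartrecToTM2 StateTransition

abbrev St := TM2.Stmt (fun _ : K' => Γ') Λ' (Option Γ')
abbrev Cf := TM2.Cfg (fun _ : K' => Γ') Λ' (Option Γ')
abbrev FQ := Option St × Option Γ'

def fstk : FQ → K'
  | (some (.push k _ _), _) => k
  | (some (.peek k _ _), _) => k
  | (some (.pop k _ _), _) => k
  | _ => K'.main

def fnxt : FQ → Option Γ' → FQ
  | (none, v), _ => (none, v)
  | (some (.push _ _ q), v), _ => (some q, v)
  | (some (.peek _ f q), v), δ => (some q, f v δ)
  | (some (.pop _ f q), v), δ => (some q, f v δ)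
  | (some (.load a q), v), _ => (some q, a v)
  | (some (.branch f q₁ q₂), v), _ => (some (cond (f v) q₁ q₂), v)
  | (some (.goto f), v), _ => (some (tr (f v)), v)
  | (some .halt, v), _ => (none, v)

def fact : FQ → Option Γ' → List Γ'
  | (some (.push _ f _), v), δ => f v :: δ.toList
  | (some (.pop _ _ _), _), _ => []
  | _, δ => δ.toList

def fstep : FQ × (K' → List Γ') → FQ × (K' → List Γ') := mstep fstk fnxt fact

theorem head_tail (l : List Γ') : l.head?.toList ++ l.tail = l := by cases l <;> rfl

theorem upd_same (S : K' → List Γ') (k : K') :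
    Function.update S k ((S k).head?.toList ++ (S k).tail) = S := by
  rw [head_tail, Function.update_eq_self]

def emb (c : Cf) : FQ × (K' → List Γ') := ((c.l.map tr, c.var), c.stk)

theorem fstep_none (v : Option Γ') (S : K' → List Γ') :
    fstep ((none, v), S) = ((none, v), S) := by
  simp only [fstep, mstep, fstk, fnxt, fact, upd_same]

theorem fstep_aux (q : St) : ∀ (v : Option Γ') (S : K' → List Γ'),
    ∃ m, fstep^[m + 1] ((some q, v), S) = emb (TM2.stepAux q v S) := by
  induction q with
  | push k f q ih =>
    intro v S
    obtain ⟨m, hm⟩ := ih v (Function.update S k (f v :: S k))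
    refine ⟨m + 1, ?_⟩
    rw [Function.iterate_succ_apply, TM2.stepAux, ← hm]
    simp only [fstep, mstep, fstk, fnxt, fact, List.cons_append, head_tail]
  | peek k f q ih =>
    intro v S
    obtain ⟨m, hm⟩ := ih (f v (S k).head?) S
    refine ⟨m + 1, ?_⟩
    rw [Function.iterate_succ_apply, TM2.stepAux, ← hm]
    simp only [fstep, mstep, fstk, fnxt, fact, upd_same]
  | pop k f q ih =>
    intro v S
    obtain ⟨m, hm⟩ := ih (f v (S k).head?) (Function.update S k (S k).tail)
    refine ⟨m + 1, ?_⟩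
    rw [Function.iterate_succ_apply, TM2.stepAux, ← hm]
    simp only [fstep, mstep, fstk, fnxt, fact, List.nil_append]
  | load a q ih =>
    intro v S
    obtain ⟨m, hm⟩ := ih (a v) S
    refine ⟨m + 1, ?_⟩
    rw [Function.iterate_succ_apply, TM2.stepAux, ← hm]
    simp only [fstep, mstep, fstk, fnxt, fact, upd_same]
  | branch f q₁ q₂ ih₁ ih₂ =>
    intro v S
    have : ∃ m, fstep^[m + 1] ((some (cond (f v) q₁ q₂), v), S) =
        emb (cond (f v) (TM2.stepAux q₁ v S) (TM2.stepAux q₂ v S)) := by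
      cases f v
      · exact ih₂ v S
      · exact ih₁ v S
    obtain ⟨m, hm⟩ := this
    refine ⟨m + 1, ?_⟩
    rw [Function.iterate_succ_apply, TM2.stepAux, ← hm]
    simp only [fstep, mstep, fstk, fnxt, fact, upd_same]
  | goto f =>
    intro v S
    refine ⟨0, ?_⟩
    simp [fstep, mstep, fstk, fnxt, fact, upd_same, emb]
    rfl
  | halt =>
    intro v S
    refine ⟨0, ?_⟩
    simp [fstep, mstep, fstk, fnxt, fact, upd_same, emb]
    rfl

theorem fstep_step {c c' : Cf} (h : TM2.step tr c = some c') :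
    ∃ m, fstep^[m + 1] (emb c) = emb c' := by
  rcases c with ⟨_ | l, v, S⟩
  · change (none : Option Cf) = some c' at h
    cases h
  · have h' : some (TM2.stepAux (tr l) v S) = some c' := h
    obtain rfl := Option.some.inj h'
    exact fstep_aux (tr l) v S

theorem fstep_reaches {c c' : Cf} (h : Reaches (TM2.step tr) c c') :
    ∃ m, fstep^[m] (emb c) = emb c' := by
  induction h with
  | refl => exact ⟨0, rfl⟩
  | tail _ h1 ih =>
    obtain ⟨m, hm⟩ := ih
    obtain ⟨k, hk⟩ := fstep_step h1
    exact ⟨k + 1 + m, by rw [Function.iterate_add_apply, hm, hk]⟩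

theorem fstep_dom (v : Option Γ') (T : K' → List Γ') : ∀ (n : ℕ) (c : Cf),
    fstep^[n] (emb c) = ((none, v), T) → (eval (TM2.step tr) c).Dom := by
  intro n
  induction n using Nat.strong_induction_on with
  | _ n ih =>
    intro c hc
    rcases hs : TM2.step tr c with _ | c'
    · exact Part.dom_iff_mem.2 ⟨c, mem_eval.2 ⟨.refl, hs⟩⟩
    · have hr : Reaches (TM2.step tr) c c' := .single hs
      rw [reaches_eval hr]
      obtain ⟨m, hm⟩ := fstep_step hs
      by_cases hn : m + 1 ≤ n
      · obtain ⟨k, rfl⟩ := Nat.exists_eq_add_of_le hn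
        refine ih k (by omega) c' ?_
        rw [← hm, ← Function.iterate_add_apply, add_comm k]; exact hc
      · obtain ⟨k, hk⟩ := Nat.exists_eq_add_of_le (show n ≤ m + 1 by omega)
        have h0 : emb c' = ((none, v), T) := by
          rw [← hm, hk, add_comm, Function.iterate_add_apply, hc,
            Function.iterate_fixed (fstep_none v T)]
        rcases n with _ | n
        · rcases c with ⟨_ | l, w, S⟩
          · change (none : Option Cf) = some c' at hs
            cases hs
          · have h2 : (some (tr l) : Option St) = none := congrArg (fun x => x.1.1) hc
            cases h2
        · exact ih 0 (by omega) c' h0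

/-- the finite set of states -/
noncomputable def QS (c : ToPartrec.Code) : Finset FQ :=
  (TM2.stmts tr (codeSupp c Cont'.halt)) ×ˢ Finset.univ

theorem QS_closed (c : ToPartrec.Code) (s : FQ) (hs : s ∈ QS c) (δ : Option Γ') :
    fnxt s δ ∈ QS c := by
  classical
  have ss := tr_supports c Cont'.halt
  rcases s with ⟨o, v⟩
  simp only [QS, Finset.mem_product, Finset.mem_univ, and_true] at hs ⊢
  rcases o with _ | q
  · simpa [fnxt] using hs
  · have hsup := @TM2.stmts_supportsStmt _ _ _ _ ⟨trNormal c Cont'.halt⟩ _ _ _ ss hs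
    cases q with
    | push k f q => exact TM2.stmts_trans (by simp [TM2.stmts₁, TM2.stmts₁_self]) hs
    | peek k f q => exact TM2.stmts_trans (by simp [TM2.stmts₁, TM2.stmts₁_self]) hs
    | pop k f q => exact TM2.stmts_trans (by simp [TM2.stmts₁, TM2.stmts₁_self]) hs
    | load a q => exact TM2.stmts_trans (by simp [TM2.stmts₁, TM2.stmts₁_self]) hs
    | branch f q₁ q₂ =>
      simp only [fnxt]
      refine TM2.stmts_trans ?_ hs
      cases f v <;> simp [TM2.stmts₁, TM2.stmts₁_self]
    | goto f =>
      exact Finset.some_mem_insertNone.2 (Finset.mem_biUnion.2 ⟨f v, hsup v, TM2.stmts₁_self⟩)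
    | halt => simp [fnxt, TM2.stmts]

theorem QS_init (c : ToPartrec.Code) (v : Option Γ') :
    (some (tr (trNormal c Cont'.halt)), v) ∈ QS c := by
  have ss := tr_supports c Cont'.halt
  classical
  exact Finset.mem_product.2 ⟨Finset.some_mem_insertNone.2
    (Finset.mem_biUnion.2 ⟨_, ss.1, TM2.stmts₁_self⟩), Finset.mem_univ _⟩

theorem QS_halt (c : ToPartrec.Code) (v : Option Γ') : ((none, v) : FQ) ∈ QS c := by
  simp [QS, TM2.stmts]

theorem machine : ∃ (V : VC) (γ0 : Γ5) (N : ℕ → ℕ), Primrec N ∧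
    ¬ ComputablePred (fun n => Relation.EqvGen V.Step (Function.update γ0 1 (N n : ℤ)) V.τ) := by
  classical
  let g : ℕ →. ℕ := fun n => (Nat.Partrec.Code.eval (Denumerable.ofNat Nat.Partrec.Code n) 0).map
    (fun _ => 0)
  have hg : Partrec g :=
    (Nat.Partrec.Code.eval_part.comp (Computable.ofNat _) (Computable.const 0)).map
      (Computable.const 0).to₂
  obtain ⟨c, hc⟩ := ToPartrec.Code.exists_code (Nat.Partrec'.part_iff₁.2 hg)
  have hc' : ∀ n, c.eval [n] = pure <$> g n := fun n => hc ⟨[n], rfl⟩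
  let Q := {s : FQ // s ∈ QS c}
  let nxt : Q → Option Γ' → Q := fun s δ => ⟨fnxt s.1 δ, QS_closed c s.1 s.2 δ⟩
  let stk : Q → K' := fun s => fstk s.1
  let act : Q → Option Γ' → List Γ' := fun s δ => fact s.1 δ
  let ι : Q × (K' → List Γ') → FQ × (K' → List Γ') := fun x => (x.1.1, x.2)
  have hι : Function.Injective ι := by
    rintro ⟨s, S⟩ ⟨t, T⟩ h
    simp only [ι, Prod.mk.injEq] at h
    exact Prod.ext (Subtype.ext h.1) h.2
  have semi : ∀ x, ι (mstep stk nxt act x) = fstep (ι x) := fun x => rfl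
  have semin : ∀ n x, ι ((mstep stk nxt act)^[n] x) = fstep^[n] (ι x) := fun n x =>
    (Function.Semiconj.iterate_right (f := ι) semi n) x
  let h : Q × (K' → List Γ') :=
    (⟨(none, none), QS_halt c _⟩, K'.elim (trList [0]) [] [] [])
  have hι0 : ι h = emb (PartrecToTM2.halt [0]) := rfl
  have hh : mstep stk nxt act h = h := hι (by rw [semi]; exact fstep_none _ _)
  let s0 : ℕ → Q × (K' → List Γ') := fun n =>
    (⟨(some (tr (trNormal c Cont'.halt)), none), QS_init c _⟩, K'.elim (trList [n]) [] [] [])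
  have hs0 : ∀ n, ι (s0 n) = emb (init c [n]) := fun n => rfl
  have main : ∀ n, (∃ m, (mstep stk nxt act)^[m] (s0 n) = h) ↔
      (Nat.Partrec.Code.eval (Denumerable.ofNat Nat.Partrec.Code n) 0).Dom := by
    intro n
    have hev := PartrecToTM2.tr_eval c [n]
    rw [hc'] at hev
    constructor
    · rintro ⟨m, hm⟩
      have h1 := congrArg ι hm
      rw [semin, hs0] at h1
      have h2 := fstep_dom _ _ m _ h1
      rw [hev] at h2
      exact h2
    · intro hd
      have h1 : PartrecToTM2.halt [0] ∈ eval (TM2.step tr) (init c [n]) := by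
        rw [hev]
        exact Part.mem_map PartrecToTM2.halt
          (Part.mem_map pure (Part.mem_map (fun _ => 0) (Part.get_mem hd)))
      obtain ⟨m, hm⟩ := fstep_reaches (mem_eval.1 h1).1
      exact ⟨m, hι (by rw [semin, hs0, hι0]; exact hm)⟩
  refine ⟨stackVC stk nxt act h, enc (s0 0), inN, primrec_inN, fun hcomp => ?_⟩
  have henc : ∀ n, Function.update (enc (s0 0)) 1 (inN n : ℤ) = enc (s0 n) := by
    intro n
    rw [← encL_trList]
    funext j
    fin_cases j <;> rfl
  simp only [henc, stack_iff stk nxt act h _ hh, main] at hcomp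
  apply ComputablePred.halting_problem 0
  refine ComputablePred.computable_of_manyOneReducible (p := _)
    ⟨Encodable.encode, Computable.encode, fun a => ?_⟩ hcomp
  simp
end Machine2

section Final
open GLPrimcodable

abbrev GL4 := Matrix.GeneralLinearGroup (Fin 4) ℤ

theorem primrec_gl_pair : Primrec (fun g : GL4 => (g.1, g.2)) := by
  let : Primcodable {p : Matrix (Fin 4) (Fin 4) ℤ × Matrix (Fin 4) (Fin 4) ℤ //
      p.1 * p.2 = 1 ∧ p.2 * p.1 = 1} := Primcodable.subtype primrecPred_isUnitPair
  have h1 : Primrec (unitsEquivProdSubtype (Matrix (Fin 4) (Fin 4) ℤ)) := Primrec.of_equiv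
  exact (Primrec.subtype_val (hp := primrecPred_isUnitPair)).comp h1

theorem primrec_gl_mk {α : Type} [Primcodable α] (f : α → GL4)
    (hf : Primrec (fun a => ((f a).1, (f a).2))) : Primrec f := by
  let : Primcodable {p : Matrix (Fin 4) (Fin 4) ℤ × Matrix (Fin 4) (Fin 4) ℤ //
      p.1 * p.2 = 1 ∧ p.2 * p.1 = 1} := Primcodable.subtype primrecPred_isUnitPair
  refine (Primrec.of_equiv_iff (unitsEquivProdSubtype (Matrix (Fin 4) (Fin 4) ℤ))).1 ?_
  refine (Primrec.subtype_val_iff (hp := primrecPred_isUnitPair)).1 ?_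
  exact hf

theorem primrec_gl_mul : Primrec₂ (fun g h : GL4 => g * h) := by
  refine primrec_gl_mk _ ?_
  have h1 : Primrec (fun p : GL4 × GL4 => (p.1.1, p.1.2)) := primrec_gl_pair.comp Primrec.fst
  have h2 : Primrec (fun p : GL4 × GL4 => (p.2.1, p.2.2)) := primrec_gl_pair.comp Primrec.snd
  refine Primrec.pair ?_ ?_
  · exact primrec_matMul.comp ((Primrec.fst.comp h1).pair (Primrec.fst.comp h2))
  · exact primrec_matMul.comp ((Primrec.snd.comp h2).pair (Primrec.snd.comp h1))

theorem primrec_gl_pow (g : GL4) : Primrec (fun n : ℕ => g ^ n) := by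
  refine (Primrec.nat_rec₁ (f := fun _ h => h * g) 1 ?_).of_eq ?_
  · exact primrec_gl_mul.comp Primrec.snd (Primrec.const g)
  · intro n
    induction n with
    | zero => rfl
    | succ n ih => rw [pow_succ, ← ih]

/-- block diagonal embedding -/
def blk : M2 × M2 →* Matrix (Fin 4) (Fin 4) ℤ where
  toFun p := Matrix.reindexAlgEquiv ℤ ℤ (finSumFinEquiv : Fin 2 ⊕ Fin 2 ≃ Fin 4)
    (Matrix.fromBlocks p.1 0 0 p.2)
  map_one' := by
    rw [Prod.fst_one, Prod.snd_one, Matrix.fromBlocks_one, map_one]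
  map_mul' p q := by
    rw [← map_mul, Matrix.fromBlocks_multiply]; simp

theorem blk_inj : Function.Injective blk := by
  intro p q h
  have h' := (Matrix.reindexAlgEquiv ℤ ℤ (finSumFinEquiv : Fin 2 ⊕ Fin 2 ≃ Fin 4)).injective h
  rw [Matrix.fromBlocks_inj] at h'
  exact Prod.ext h'.1 h'.2.2.2

def D : M2ˣ × M2ˣ →* GL4 :=
  (Units.map blk).comp (MulEquiv.prodUnits (M := M2) (N := M2)).symm.toMonoidHom

theorem D_inj : Function.Injective D :=
  (Units.map_injective blk_inj).comp (MulEquiv.prodUnits (M := M2) (N := M2)).symm.injective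

theorem final_of_machine (V : VC) (γ0 : Γ5) (N : ℕ → ℕ) (hN : Primrec N)
    (hV : ¬ ComputablePred (fun n =>
      Relation.EqvGen V.Step (Function.update γ0 1 (N n : ℤ)) V.τ)) :
    ¬ ComputablePred (fun l : List GL4 × List GL4 =>
      ∃ g : GL4, Subgroup.map (MulAut.conj g⁻¹).toMonoidHom (Subgroup.closure {x | x ∈ l.1}) =
          Subgroup.closure {x | x ∈ l.2}) := by
  classical
  intro hcomp
  have := V.fin
  obtain ⟨idx, hidx⟩ := exists_injective_nat V.Gen
  let f : V.F →* M2ˣ := FreeGroup.lift fun g => hyp (idx g : ℤ)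
  have : Nontrivial V.Gen := ⟨⟨Sum.inl 0, Sum.inl 1, by simp⟩⟩
  have hf : Function.Injective f :=
    hyp_free (fun g => (idx g : ℤ)) (Nat.cast_injective.comp hidx)
  let z : M2ˣ := -1
  have hz : ∀ a, Commute a z := fun a => Commute.neg_one_right a
  have hzz : z * z = 1 := by simp [z]
  have hz1 : z ≠ 1 := by
    intro h
    have := congrArg (fun u : M2ˣ => (u : M2) 0 0) h
    simp [z] at this
  let γ : ℕ → Γ5 := fun n => Function.update γ0 1 (N n : ℤ)
  let S0 : Set (M2ˣ × M2ˣ) :=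
    (Set.range fun g : V.Gen => (f (FreeGroup.of g), f (FreeGroup.of g))) ∪
    (Set.range fun k => ((1 : M2ˣ), f (V.rel k)))
  have hS0 : S0.Finite := (Set.finite_range _).union (Set.finite_range _)
  let L0 : List (M2ˣ × M2ˣ) := hS0.toFinset.toList
  have hL0 : ∀ x, x ∈ L0 ↔ x ∈ S0 := fun x => by simp [L0]
  let E : ℕ → GL4 := fun n => D (1, z * f (V.w0 (γ n)))
  let M0 : List GL4 := L0.map D
  have hE : Primrec E := by
    let j : V.F →* GL4 := D.comp ((MonoidHom.inr _ _).comp f)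
    let H := j (V.fx 1)
    let C1 := j (V.fx 0 ^ γ0 0)
    let C2 := j (V.fx 2 ^ γ0 2 * V.fx 3 ^ γ0 3 * V.fx 4 ^ γ0 4)
    let T := j V.ft
    let Q := j V.fq
    have hpow1 : Primrec (fun n => H ^ N n) := (primrec_gl_pow H).comp hN
    have hpow2 : Primrec (fun n => H⁻¹ ^ N n) := (primrec_gl_pow H⁻¹).comp hN
    have hT : Primrec (fun n => (C1 * H ^ N n) * (C2 * T * C2⁻¹) * (H⁻¹ ^ N n * C1⁻¹)) :=
      primrec_gl_mul.comp (primrec_gl_mul.comp (primrec_gl_mul.comp (Primrec.const C1) hpow1)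
        (Primrec.const _)) (primrec_gl_mul.comp hpow2 (Primrec.const _))
    have hT' : Primrec (fun n => (C1 * H ^ N n) * (C2 * T⁻¹ * C2⁻¹) * (H⁻¹ ^ N n * C1⁻¹)) :=
      primrec_gl_mul.comp (primrec_gl_mul.comp (primrec_gl_mul.comp (Primrec.const C1) hpow1)
        (Primrec.const _)) (primrec_gl_mul.comp hpow2 (Primrec.const _))
    have hall : Primrec (fun n => (D (1, z) * Q) *
        ((C1 * H ^ N n) * (C2 * T * C2⁻¹) * (H⁻¹ ^ N n * C1⁻¹)) * (Q⁻¹ *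
        ((C1 * H ^ N n) * (C2 * T⁻¹ * C2⁻¹) * (H⁻¹ ^ N n * C1⁻¹)))) :=
      primrec_gl_mul.comp (primrec_gl_mul.comp (Primrec.const _) hT)
        (primrec_gl_mul.comp (Primrec.const _) hT')
    refine hall.of_eq fun n => ?_
    have hX : j (Xp V.fx (γ n)) = C1 * H ^ N n * C2 := by
      simp only [Xp, γ, C1, H, C2, map_mul, map_zpow]
      simp [Function.update_of_ne, mul_assoc]
    have hEn : E n = D (1, z) * j (V.w0 (γ n)) := by
      simp only [E, j, MonoidHom.comp_apply, ← map_mul]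
      simp
    have hw : j (V.w0 (γ n)) = Q * (j (Xp V.fx (γ n)) * T * (j (Xp V.fx (γ n)))⁻¹) *
        (Q⁻¹ * (j (Xp V.fx (γ n)) * T⁻¹ * (j (Xp V.fx (γ n)))⁻¹)) := by
      simp only [VC.w0, Tp, map_mul, map_inv, Q, T]
      group
    rw [hEn, hw, hX]
    simp only [inv_pow, mul_inv_rev, mul_assoc]
  let l : ℕ → List GL4 × List GL4 := fun n => (M0 ++ [E n], M0 ++ [E n, D (1, z)])
  have hl : Primrec l := by
    refine Primrec.pair ?_ ?_
    · exact Primrec.list_append.comp (Primrec.const M0)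
        (Primrec.list_cons.comp hE (Primrec.const []))
    · exact Primrec.list_append.comp (Primrec.const M0)
        (Primrec.list_cons.comp hE (Primrec.const [D (1, z)]))
  apply hV
  refine ComputablePred.computable_of_manyOneReducible (p := _) ⟨l, hl.to_comp, fun n => ?_⟩ hcomp
  have hm1 : Subgroup.closure {x | x ∈ (l n).1} = (Subgroup.closure (V.S f z (γ n))).map D := by
    rw [MonoidHom.map_closure]
    congr 1
    ext x
    change x ∈ M0 ++ [E n] ↔ x ∈ D '' (S0 ∪ {(1, z * f (V.w0 (γ n)))})
    simp only [Set.image_union, List.mem_append, List.mem_singleton, Set.image_singleton, M0,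
      List.mem_map, hL0]
    rfl
  have hm2 : Subgroup.closure {x | x ∈ (l n).2} =
      (Subgroup.closure (V.S f z (γ n))).map D ⊔ Subgroup.closure {D (1, z)} := by
    rw [← hm1, ← Subgroup.closure_union]
    congr 1
    ext x
    change x ∈ M0 ++ [E n, D (1, z)] ↔ x ∈ M0 ++ [E n] ∨ x = D (1, z)
    simp [or_assoc]
  rw [hm1, hm2]
  constructor
  · intro h
    have hA := V.thmA f z hz (γ n) h
    refine ⟨1, ?_⟩
    have h1 : (MulAut.conj (1 : GL4)⁻¹).toMonoidHom = MonoidHom.id _ := by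
      ext x : 1; simp
    rw [h1, Subgroup.map_id]
    refine (sup_eq_left.2 ?_).symm
    rw [Subgroup.closure_le, Set.singleton_subset_iff]
    exact ⟨_, hA, rfl⟩
  · rintro ⟨g, hg⟩
    by_contra h
    have hB := V.thmB f z hf hz hzz (γ n) h
    have hmem : D (1, z) ∈ (Subgroup.closure (V.S f z (γ n))).map D ⊔ Subgroup.closure {D (1, z)} :=
      Subgroup.mem_sup_right (Subgroup.subset_closure rfl)
    rw [← hg] at hmem
    obtain ⟨_, ⟨y, hy, rfl⟩, hgy⟩ := hmem
    have e : MulAut.conj g⁻¹ (D y) = D (1, z) := hgy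
    have hyy : y * y = 1 := by
      apply D_inj
      apply (MulAut.conj g⁻¹).injective
      rw [map_mul, map_mul, e, ← map_mul, map_one, map_one, Prod.mk_mul_mk, hzz, one_mul]
      exact map_one D
    have hy1 := hB y hy hyy
    rw [hy1, map_one, map_one] at e
    have e2 : (1 : M2ˣ × M2ˣ) = (1, z) := D_inj (by rw [map_one, e])
    exact hz1 (congrArg Prod.snd e2).symm

end Final


end GLUndec

open GLPrimcodable in
/-- There is no algorithm deciding whether the subgroups of `GL(4,ℤ)` generated by two
given finite lists of elements are conjugate in `GL(4,ℤ)`. -/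
theorem conjugacy_of_fg_subgroups_of_GL4Z_undecidable :
    ¬ ComputablePred (fun l : List (Matrix.GeneralLinearGroup (Fin 4) ℤ) ×
        List (Matrix.GeneralLinearGroup (Fin 4) ℤ) =>
      ∃ g : Matrix.GeneralLinearGroup (Fin 4) ℤ,
        Subgroup.map (MulAut.conj g⁻¹).toMonoidHom
            (Subgroup.closure {x | x ∈ l.1}) =
          Subgroup.closure {x | x ∈ l.2}) := by
  obtain ⟨V, γ0, N, hN, hV⟩ := GLUndec.machine
  exact GLUndec.final_of_machine V γ0 N hN hV
end

section
/- Let π : F₂ → H be a surjective group homomorphism and L = {(u,v) ∈ F₂ × F₂ : π(u) = π(v)} the Mihailova subgroup. If a ∈ F₂ × F₂ and L ⊆ a⁻¹La (i.e., a·x·a⁻¹ ∈ L for every x ∈ L), then L = a⁻¹La. -/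
/-- The Mihailova subgroup associated to a homomorphism `π : F₂ → H`:
`L = {(u,v) ∈ F₂ × F₂ : π(u) = π(v)}`. -/
def mihailova {H : Type*} [Group H] (π : FreeGroup (Fin 2) →* H) :
    Subgroup (FreeGroup (Fin 2) × FreeGroup (Fin 2)) where
  carrier := {p | π p.1 = π p.2}
  one_mem' := by simp
  mul_mem' := by
    intro a b ha hb
    simp only [Set.mem_setOf_eq, Prod.fst_mul, Prod.snd_mul, map_mul] at *
    rw [ha, hb]
  inv_mem' := by
    intro a ha
    simp only [Set.mem_setOf_eq, Prod.fst_inv, Prod.snd_inv, map_inv] at *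
    rw [ha]

theorem mihailova_eq_conj_of_le {H : Type*} [Group H] (π : FreeGroup (Fin 2) →* H)
    (hπ : Function.Surjective π) (a : FreeGroup (Fin 2) × FreeGroup (Fin 2))
    (h : ∀ x ∈ mihailova π, a * x * a⁻¹ ∈ mihailova π) :
    mihailova π = Subgroup.map (MulAut.conj a⁻¹).toMonoidHom (mihailova π) := by
  have hm : ∀ x, x ∈ mihailova π ↔ π x.1 = π x.2 := fun x => Iff.rfl
  ext x
  rw [Subgroup.mem_map]
  constructor
  · intro hx
    exact ⟨a * x * a⁻¹, h x hx, by simp [mul_assoc]⟩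
  · rintro ⟨y, hy, rfl⟩
    have h1 := h (a.1⁻¹ * y.1 * a.1, a.1⁻¹ * y.1 * a.1) rfl
    rw [hm] at h1 hy ⊢
    simp only [Prod.fst_mul, Prod.snd_mul, Prod.fst_inv, Prod.snd_inv, map_mul, map_inv] at h1
    have h2 : π y.2 = π a.2 * ((π a.1)⁻¹ * π y.1 * π a.1) * (π a.2)⁻¹ := by
      rw [← h1, ← hy]; group
    simp only [MulEquiv.toMonoidHom_eq_coe, MonoidHom.coe_coe, MulAut.conj_inv_apply,
      Prod.fst_mul, Prod.snd_mul, Prod.fst_inv, Prod.snd_inv, map_mul, map_inv]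
    rw [h2]; group
end

section
/- Let R be a finite subset of F₂, let N be the normal closure of R in F₂, let H = F₂/N, and let π : F₂ → H be the quotient homomorphism. Then the Mihailova subgroup L = {(u,v) ∈ F₂ × F₂ : π(u) = π(v)} equals the subgroup of F₂ × F₂ generated by the set {(a,a), (b,b)} ∪ {(1, r) : r ∈ R}, where a, b are the two free generators of F₂. In particular, if R has m elements then L is generated by m + 2 elements, so L is finitely generated. -/
theorem mihailova_eq_closure_and_fg (R : Finset (FreeGroup (Fin 2))) :
    (mihailova (QuotientGroup.mk'
        (Subgroup.normalClosure (R : Set (FreeGroup (Fin 2))))) =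
      Subgroup.closure
        ({(FreeGroup.of 0, FreeGroup.of 0), (FreeGroup.of 1, FreeGroup.of 1)} ∪
          (fun r => ((1 : FreeGroup (Fin 2)), r)) '' (R : Set (FreeGroup (Fin 2))))) ∧
    (∃ S : Finset (FreeGroup (Fin 2) × FreeGroup (Fin 2)),
      S.card ≤ R.card + 2 ∧
      Subgroup.closure (S : Set (FreeGroup (Fin 2) × FreeGroup (Fin 2))) =
        mihailova (QuotientGroup.mk'
          (Subgroup.normalClosure (R : Set (FreeGroup (Fin 2)))))) := by
  classical
  have key : mihailova (QuotientGroup.mk'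
        (Subgroup.normalClosure (R : Set (FreeGroup (Fin 2))))) =
      Subgroup.closure
        ({(FreeGroup.of 0, FreeGroup.of 0), (FreeGroup.of 1, FreeGroup.of 1)} ∪
          (fun r => ((1 : FreeGroup (Fin 2)), r)) '' (R : Set (FreeGroup (Fin 2)))) := by
    set K := Subgroup.closure
        ({(FreeGroup.of 0, FreeGroup.of 0), (FreeGroup.of 1, FreeGroup.of 1)} ∪
          (fun r => ((1 : FreeGroup (Fin 2)), r)) '' (R : Set (FreeGroup (Fin 2)))) with hK
    have diag : ∀ u : FreeGroup (Fin 2), (u, u) ∈ K := by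
      intro u
      induction u using FreeGroup.induction_on with
      | C1 => exact K.one_mem
      | of x =>
        apply Subgroup.subset_closure
        fin_cases x <;> simp
      | inv_of x h => exact K.inv_mem h
      | mul x y hx hy => exact K.mul_mem hx hy
    have hN : ∀ n ∈ Subgroup.normalClosure (R : Set (FreeGroup (Fin 2))),
        ((1 : FreeGroup (Fin 2)), n) ∈ K := by
      let M : Subgroup (FreeGroup (Fin 2)) := K.comap (MonoidHom.inr _ _)
      have hM : M.Normal := by
        constructor
        intro n hn g
        have h := K.mul_mem (K.mul_mem (diag g) hn) (K.inv_mem (diag g))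
        have e : (g, g) * (MonoidHom.inr _ _ n) * (g, g)⁻¹ = (1, g * n * g⁻¹) := by
          ext <;> simp
        rw [e] at h
        exact h
      have hle : Subgroup.normalClosure (R : Set (FreeGroup (Fin 2))) ≤ M := by
        apply Subgroup.normalClosure_le_normal
        intro r hr
        exact Subgroup.subset_closure (Or.inr ⟨r, hr, rfl⟩)
      intro n hn
      exact hle hn
    apply le_antisymm
    · rintro ⟨u, v⟩ h
      have h' : u⁻¹ * v ∈ Subgroup.normalClosure (R : Set (FreeGroup (Fin 2))) :=
        QuotientGroup.eq.mp h
      have := K.mul_mem (diag u) (hN _ h')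
      simpa using this
    · rw [hK, Subgroup.closure_le]
      rintro p (hp | ⟨r, hr, rfl⟩)
      · rcases hp with rfl | rfl <;> exact rfl
      · refine QuotientGroup.eq.mpr ?_
        simpa using Subgroup.subset_normalClosure hr
  refine ⟨key, {(FreeGroup.of 0, FreeGroup.of 0), (FreeGroup.of 1, FreeGroup.of 1)} ∪
          R.image (fun r => ((1 : FreeGroup (Fin 2)), r)), ?_, ?_⟩
  · refine (Finset.card_union_le _ _).trans ?_
    rw [add_comm]
    exact add_le_add Finset.card_image_le Finset.card_le_two
  · rw [key]
    push_cast
    rfl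
end

section
/- Let N be a group, let p ≥ 1, and let φ, ψ : FreeGroup (Fin (p+1)) → Aut N be two homomorphisms such that φ and ψ agree on the generators x_0, …, x_{p-1}, ψ(x_p) = 1, and φ(x_p) lies in the subgroup of Aut N generated by {φ(x_0), …, φ(x_{p-1})}. Then the semidirect products N ⋊_φ FreeGroup (Fin (p+1)) and N ⋊_ψ FreeGroup (Fin (p+1)) are isomorphic as groups. -/
theorem semidirect_iso_of_last_generator_in_closure {N : Type*} [Group N] (p : ℕ) (hp : 1 ≤ p)
    (φ ψ : FreeGroup (Fin (p + 1)) →* MulAut N)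
    (hagree : ∀ i : Fin (p + 1), (i : ℕ) < p → φ (FreeGroup.of i) = ψ (FreeGroup.of i))
    (hψ : ψ (FreeGroup.of (Fin.last p)) = 1)
    (hφ : φ (FreeGroup.of (Fin.last p)) ∈
      Subgroup.closure ((fun i : Fin (p + 1) => φ (FreeGroup.of i)) ''
        {i : Fin (p + 1) | (i : ℕ) < p})) :
    Nonempty ((N ⋊[φ] FreeGroup (Fin (p + 1))) ≃* (N ⋊[ψ] FreeGroup (Fin (p + 1)))) := by
  have key : ∃ w ∈ Subgroup.closure ((fun i : Fin (p + 1) => FreeGroup.of i) ''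
      {i : Fin (p + 1) | (i : ℕ) < p}), φ w = φ (FreeGroup.of (Fin.last p)) := by
    rw [← Subgroup.mem_map, MonoidHom.map_closure, Set.image_image]
    exact hφ
  obtain ⟨w, hw, hwφ⟩ := key
  have ext_w : ∀ {H : Type _} [Group H] (f g : FreeGroup (Fin (p + 1)) →* H),
      (∀ i : Fin (p + 1), (i : ℕ) < p → f (FreeGroup.of i) = g (FreeGroup.of i)) →
      f w = g w := by
    intro H _ f g h
    refine MonoidHom.eqOn_closure (f := f) (g := g) ?_ hw
    rintro _ ⟨i, hi, rfl⟩
    exact h i hi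
  have hψw : ψ w = φ (FreeGroup.of (Fin.last p)) := by
    rw [← hwφ]
    refine MonoidHom.eqOn_closure (f := ψ) (g := φ) ?_ hw
    rintro _ ⟨i, hi, rfl⟩
    exact (hagree i hi).symm
  let θ : FreeGroup (Fin (p + 1)) → FreeGroup (Fin (p + 1)) →* FreeGroup (Fin (p + 1)) :=
    fun v => FreeGroup.lift fun i =>
      if (i : ℕ) < p then FreeGroup.of i else FreeGroup.of i * v
  have θlt : ∀ v (i : Fin (p + 1)), (i : ℕ) < p → θ v (FreeGroup.of i) = FreeGroup.of i := by
    intro v i hi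
    simp [θ, hi]
  have θlast : ∀ v, θ v (FreeGroup.of (Fin.last p)) = FreeGroup.of (Fin.last p) * v := by
    intro v
    simp [θ]
  have θw : ∀ v, θ v w = w := fun v => ext_w (θ v) (MonoidHom.id _) (θlt v)
  have cases_i : ∀ i : Fin (p + 1), (i : ℕ) < p ∨ i = Fin.last p := by
    intro i
    rcases Fin.eq_castSucc_or_eq_last i with ⟨j, rfl⟩ | h
    · left; simp
    · exact Or.inr h
  have h1 : (θ w⁻¹).comp (θ w) = MonoidHom.id _ := by
    ext i
    rcases cases_i i with h | rfl
    · simp [θlt _ i h]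
    · simp [θlast, θw]
  have h2 : (θ w).comp (θ w⁻¹) = MonoidHom.id _ := by
    ext i
    rcases cases_i i with h | rfl
    · simp [θlt _ i h]
    · simp [θlast, θw]
  have h3 : ψ.comp (θ w) = φ := by
    apply FreeGroup.ext_hom
    intro i
    rcases cases_i i with h | rfl
    · simp [θlt _ i h, hagree i h]
    · simp [θlast, hψ, hψw]
  refine ⟨SemidirectProduct.congr (MulEquiv.refl N) (MonoidHom.toMulEquiv (θ w) (θ w⁻¹) h1 h2) ?_⟩
  intro g
  ext n
  have := DFunLike.congr_fun h3 g
  simp at this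
  simp [this]
end

section
/- Let A be an abelian group, let r ≥ 2, let φ : FreeGroup (Fin r) → Aut A be a homomorphism, and let G = A ⋊_φ FreeGroup (Fin r) be the semidirect product. Then every normal subgroup of G whose underlying group is commutative is contained in the canonical copy of A inside G (the image of the inclusion A → G). In particular, the canonical copy of A is the unique maximal normal abelian subgroup of G. -/
theorem aux_of_comm {α : Type*} (a b : α)
    (h : FreeGroup.of a * FreeGroup.of b = FreeGroup.of b * FreeGroup.of a) : a = b := by
  classical
  by_contra hne
  have h2 := congrArg (FreeGroup.lift (fun c : α =>
    if c = a then (Equiv.swap 0 1 : Equiv.Perm (Fin 3)) else Equiv.swap 1 2)) h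
  simp only [map_mul, FreeGroup.lift_apply_of, if_true, if_neg (Ne.symm hne)] at h2
  revert h2
  decide

theorem aux_cyclic {G : Type*} [Group G] [IsFreeGroup G] (h : ∀ x y : G, x * y = y * x) :
    ∃ c : G, ∀ x : G, ∃ n : ℤ, c ^ n = x := by
  let e := IsFreeGroup.toFreeGroup G
  have hs : ∀ a b : IsFreeGroup.Generators G, a = b := by
    intro a b
    apply aux_of_comm
    apply e.symm.injective
    simp only [map_mul]
    exact h _ _
  rcases isEmpty_or_nonempty (IsFreeGroup.Generators G) with hE | ⟨⟨a⟩⟩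
  · refine ⟨1, fun x => ⟨0, e.injective (Subsingleton.elim _ _)⟩⟩
  · letI : Unique (IsFreeGroup.Generators G) := ⟨⟨a⟩, fun b => hs _ _⟩
    obtain ⟨g, hg⟩ := IsCyclic.exists_generator (α := FreeGroup (IsFreeGroup.Generators G))
    refine ⟨e.symm g, fun x => ?_⟩
    obtain ⟨n, hn⟩ := hg (e x)
    refine ⟨n, ?_⟩
    rw [← map_zpow]
    simp only at hn
    rw [hn]
    simp

theorem aux_sub {α : Type*} (N : Subgroup (FreeGroup α))
    (h : ∀ x ∈ N, ∀ y ∈ N, x * y = y * x) :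
    ∃ c ∈ N, ∀ x ∈ N, ∃ n : ℤ, c ^ n = x := by
  obtain ⟨c, hc⟩ := aux_cyclic (G := N) (fun x y => Subtype.ext (h x x.2 y y.2))
  refine ⟨c, c.2, fun x hx => ?_⟩
  obtain ⟨n, hn⟩ := hc ⟨x, hx⟩
  exact ⟨n, by simpa using congrArg Subtype.val hn⟩

theorem aux_commute {α : Type*} (x y : FreeGroup α) (h : x * y = y * x) :
    ∃ (c : FreeGroup α) (i j : ℤ), c ^ i = x ∧ c ^ j = y := by
  have hc : ∀ u ∈ ({x, y} : Set (FreeGroup α)), ∀ v ∈ ({x, y} : Set (FreeGroup α)),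
      u * v = v * u := by
    rintro u (rfl | rfl) v (rfl | rfl) <;> first | rfl | exact h | exact h.symm
  letI := Subgroup.closureCommGroupOfComm hc
  obtain ⟨c, -, hN⟩ := aux_sub (Subgroup.closure {x, y}) (fun u hu v hv =>
    congrArg Subtype.val (mul_comm (⟨u, hu⟩ : Subgroup.closure {x, y}) ⟨v, hv⟩))
  obtain ⟨i, hi⟩ := hN x (Subgroup.subset_closure (by simp))
  obtain ⟨j, hj⟩ := hN y (Subgroup.subset_closure (by simp))
  exact ⟨c, i, j, hi, hj⟩

theorem aux_normal {α : Type*} (a b : α) (hab : a ≠ b) (N : Subgroup (FreeGroup α))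
    (hN : N.Normal) (h : ∀ x ∈ N, ∀ y ∈ N, x * y = y * x) : N = ⊥ := by
  classical
  obtain ⟨w, hw, hgen⟩ := aux_sub N h
  by_cases hw1 : w = 1
  · rw [eq_bot_iff]
    intro x hx
    obtain ⟨n, hn⟩ := hgen x hx
    simp [← hn, hw1]
  exfalso
  have key : ∀ x : FreeGroup α, ∃ i j : ℤ, j ≠ 0 ∧ w ^ i = x ^ (2 * j) := by
    intro x
    obtain ⟨k, hk⟩ := hgen _ (hN.conj_mem w hw x)
    obtain ⟨l, hl⟩ := hgen _ (hN.conj_mem w hw x⁻¹)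
    have h1 : w ^ (k * l) = w := by
      rw [zpow_mul, hk, conj_zpow, hl]; group
    have h2 : k * l = 1 := by
      have : w ^ (k * l - 1) = 1 := by rw [zpow_sub_one, h1, mul_inv_cancel]
      have := (IsMulTorsionFree.zpow_eq_one_iff_right hw1).1 this
      lia
    have h3 : k * k = 1 := by
      rcases Int.eq_one_or_neg_one_of_mul_eq_one h2 with rfl | rfl <;> norm_num
    have h4 : x * (x * w * x⁻¹) * x⁻¹ = w := by
      rw [← hk, ← conj_zpow, ← hk, ← zpow_mul, h3, zpow_one]
    have h5 : (x * x) * w = w * (x * x) := by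
      nth_rewrite 2 [← h4]
      group
    obtain ⟨c, i, j, hi, hj⟩ := aux_commute _ _ h5
    refine ⟨i, j, ?_, ?_⟩
    · rintro rfl
      exact hw1 (by simpa using hj.symm)
    · rw [zpow_mul, zpow_two, ← hi, ← hj, ← zpow_mul, ← zpow_mul, mul_comm]
  obtain ⟨i, j, hj, e1⟩ := key (FreeGroup.of a)
  obtain ⟨i', j', hj', e2⟩ := key (FreeGroup.of b)
  have hb : (FreeGroup.of b) ≠ 1 := FreeGroup.of_ne_one b
  have e3 : (FreeGroup.of a) ^ (2 * j * i') = (FreeGroup.of b) ^ (2 * j' * i) := by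
    rw [zpow_mul, ← e1, zpow_mul _ (2 * j'), ← e2, ← zpow_mul, ← zpow_mul, mul_comm]
  have e4 := congrArg (FreeGroup.lift (fun c : α =>
    if c = a then FreeGroup.of a else 1)) e3
  simp only [map_zpow, FreeGroup.lift_apply_of, if_true, if_neg (Ne.symm hab), one_zpow] at e4
  have e5 := (IsMulTorsionFree.zpow_eq_one_iff_right (FreeGroup.of_ne_one a)).1 e4
  have e6 : i' = 0 := by simpa [hj] using e5
  rw [e6, zpow_zero] at e2
  have e7 := (IsMulTorsionFree.zpow_eq_one_iff_right hb).1 e2.symm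
  lia

theorem normal_abelian_subgroup_le_inl {A : Type*} [CommGroup A] (r : ℕ) (hr : 2 ≤ r)
    (φ : FreeGroup (Fin r) →* MulAut A)
    (K : Subgroup (A ⋊[φ] FreeGroup (Fin r))) (hK : K.Normal)
    (hab : ∀ x ∈ K, ∀ y ∈ K, x * y = y * x) :
    K ≤ (SemidirectProduct.inl : A →* A ⋊[φ] FreeGroup (Fin r)).range := by
  have hN := aux_normal (⟨0, by lia⟩ : Fin r) ⟨1, by lia⟩ (by simp)
    (K.map (SemidirectProduct.rightHom : A ⋊[φ] FreeGroup (Fin r) →* _))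
    (hK.map _ SemidirectProduct.rightHom_surjective) (by
      rintro _ ⟨x, hx, rfl⟩ _ ⟨y, hy, rfl⟩
      rw [← map_mul, hab x hx y hy, map_mul])
  rw [SemidirectProduct.range_inl_eq_ker_rightHom]
  exact (Subgroup.map_eq_bot_iff K).1 hN
end

section
/- Let n ≥ 1 and r, s ≥ 2, and let φ : FreeGroup (Fin r) → Aut(ℤⁿ) and ψ : FreeGroup (Fin s) → Aut(ℤⁿ) be homomorphisms. If the semidirect products ℤⁿ ⋊_φ FreeGroup (Fin r) and ℤⁿ ⋊_ψ FreeGroup (Fin s) are isomorphic as groups, then the images φ(FreeGroup (Fin r)) and ψ(FreeGroup (Fin s)) are conjugate subgroups of Aut(ℤⁿ): there exists α ∈ Aut(ℤⁿ) with ψ(FreeGroup (Fin s)) = α ∘ φ(FreeGroup (Fin r)) ∘ α⁻¹. -/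
/-- `ℤⁿ`, viewed as a multiplicative group so that it can be used in `SemidirectProduct`. -/
abbrev Zn (n : ℕ) : Type := Multiplicative (Fin n → ℤ)

theorem fg_conj_reduced {β : Type*} (w : List (β × Bool)) (hw : FreeGroup.IsReduced w)
    (hne : w ≠ []) (l : β × Bool) (h1 : l ≠ ((w.head hne).1, !(w.head hne).2))
    (h2 : l ≠ w.getLast hne) : FreeGroup.IsReduced ([l] ++ w ++ [(l.1, !l.2)]) := by
  unfold FreeGroup.IsReduced at *
  have e1 : w.head? = some (w.head hne) := List.head?_eq_some_head hne
  have e2 : w.getLast? = some (w.getLast hne) := List.getLast?_eq_some_getLast hne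
  generalize w.head hne = p at *
  generalize w.getLast hne = q at *
  obtain ⟨l1, l2⟩ := l
  obtain ⟨p1, p2⟩ := p
  obtain ⟨q1, q2⟩ := q
  refine List.IsChain.append (List.IsChain.append (by simp) hw ?_) (by simp) ?_
  · simp only [e1, List.getLast?_singleton, Option.mem_def, Option.some.injEq]
    rintro x rfl y rfl
    simp at h1 ⊢
    grind
  · simp only [List.getLast?_append, e2, List.head?_singleton, Option.mem_def, Option.some.injEq]
    rintro x hx y rfl
    simp at h2 hx ⊢
    grind

theorem fg_eq_one {r : ℕ} (hr : 2 ≤ r) (a : FreeGroup (Fin r))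
    (h : ∀ g k : FreeGroup (Fin r), g * a * g⁻¹ * (k * a * k⁻¹) = k * a * k⁻¹ * (g * a * g⁻¹)) :
    a = 1 := by
  by_contra ha
  have hne : a.toWord ≠ [] := by simpa [FreeGroup.toWord_eq_nil_iff] using ha
  have hw : FreeGroup.IsReduced a.toWord := FreeGroup.isReduced_toWord
  have hmk : FreeGroup.mk a.toWord = a := FreeGroup.mk_toWord
  generalize a.toWord = w at *
  obtain ⟨l, hl, m, hm, hlm⟩ : ∃ l ∈ (({((w.head hne).1, !(w.head hne).2), w.getLast hne} :
      Finset (Fin r × Bool))ᶜ), ∃ m ∈ (({((w.head hne).1, !(w.head hne).2), w.getLast hne} :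
      Finset (Fin r × Bool))ᶜ), l ≠ m := by
    apply Finset.one_lt_card.1
    rw [Finset.card_compl]
    have := Finset.card_le_two (a := ((w.head hne).1, !(w.head hne).2)) (b := w.getLast hne)
    simp only [Fintype.card_prod, Fintype.card_fin, Fintype.card_bool]
    omega
  simp only [Finset.mem_compl, Finset.mem_insert, Finset.mem_singleton, not_or] at hl hm
  have rl := fg_conj_reduced w hw hne l hl.1 hl.2
  have rm := fg_conj_reduced w hw hne m hm.1 hm.2
  have key : ∀ l m : Fin r × Bool, l ≠ m → FreeGroup.IsReduced ([l] ++ w ++ [(l.1, !l.2)]) →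
      FreeGroup.IsReduced ([m] ++ w ++ [(m.1, !m.2)]) →
      FreeGroup.IsReduced (([l] ++ w ++ [(l.1, !l.2)]) ++ ([m] ++ w ++ [(m.1, !m.2)])) := by
    intro l m hlm rl rm
    refine List.IsChain.append rl rm ?_
    obtain ⟨l1, l2⟩ := l
    obtain ⟨m1, m2⟩ := m
    simp at hlm ⊢
    grind
  have conj : ∀ l : Fin r × Bool, FreeGroup.mk [l] * a * (FreeGroup.mk [l])⁻¹ =
      FreeGroup.mk ([l] ++ w ++ [(l.1, !l.2)]) := by
    intro l
    rw [← hmk]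
    simp [FreeGroup.inv_mk, FreeGroup.invRev, FreeGroup.mul_mk]
  have e := h (FreeGroup.mk [l]) (FreeGroup.mk [m])
  rw [conj, conj, FreeGroup.mul_mk, FreeGroup.mul_mk] at e
  have e' := congrArg FreeGroup.toWord e
  rw [FreeGroup.toWord_mk, FreeGroup.toWord_mk, (key l m hlm rl rm).reduce_eq,
    (key m l hlm.symm rm rl).reduce_eq] at e'
  simp at e'
  exact hlm e'.1

theorem sd_conj_inl {N F : Type*} [CommGroup N] [Group F] (φ : F →* MulAut N)
    (w : N ⋊[φ] F) (x : N) :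
    w * SemidirectProduct.inl x * w⁻¹ = SemidirectProduct.inl (φ w.right x) := by
  ext
  · simp [mul_comm]
  · simp

theorem sd_right_eq_one {N F M : Type*} [CommGroup N] [CommGroup M] [Group F] {s : ℕ} (hs : 2 ≤ s)
    (φ : F →* MulAut N) (ψ : FreeGroup (Fin s) →* MulAut M)
    (f : (N ⋊[φ] F) ≃* (M ⋊[ψ] FreeGroup (Fin s))) (x : N) :
    f (SemidirectProduct.inl x) = SemidirectProduct.inl (f (SemidirectProduct.inl x)).left := by
  have h1 : (f (SemidirectProduct.inl x)).right = 1 := by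
    apply fg_eq_one hs
    have hc : ∀ g : FreeGroup (Fin s), ∃ y : N, SemidirectProduct.inr g *
        f (SemidirectProduct.inl x) * (SemidirectProduct.inr g)⁻¹
          = f (SemidirectProduct.inl y) := by
      intro g
      refine ⟨φ (f.symm (SemidirectProduct.inr g)).right x, ?_⟩
      · rw [← sd_conj_inl φ (f.symm (SemidirectProduct.inr g)) x]
        simp
    intro g k
    obtain ⟨y, hy⟩ := hc g
    obtain ⟨z, hz⟩ := hc k
    have := congrArg SemidirectProduct.right (show f (SemidirectProduct.inl y) *
      f (SemidirectProduct.inl z) = f (SemidirectProduct.inl z) * f (SemidirectProduct.inl y) by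
        rw [← map_mul, ← map_mul, ← map_mul, ← map_mul, mul_comm])
    rw [← hy, ← hz] at this
    simpa using this
  ext
  · simp
  · simp [h1]

theorem images_conjugate_of_semidirect_iso (n r s : ℕ) (hn : 1 ≤ n) (hr : 2 ≤ r) (hs : 2 ≤ s)
    (φ : FreeGroup (Fin r) →* MulAut (Zn n)) (ψ : FreeGroup (Fin s) →* MulAut (Zn n))
    (hiso : Nonempty ((Zn n ⋊[φ] FreeGroup (Fin r)) ≃* (Zn n ⋊[ψ] FreeGroup (Fin s)))) :
    ∃ α : MulAut (Zn n),
      Subgroup.map (MulAut.conj α).toMonoidHom φ.range = ψ.range := by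
  obtain ⟨f⟩ := hiso
  have hf := sd_right_eq_one hs φ ψ f
  have hg := sd_right_eq_one hr ψ φ f.symm
  let α : MulAut (Zn n) :=
    { toFun := fun x => (f (SemidirectProduct.inl x)).left
      invFun := fun x => (f.symm (SemidirectProduct.inl x)).left
      left_inv := fun x => by
        show (f.symm (SemidirectProduct.inl (f (SemidirectProduct.inl x)).left)).left = x
        rw [← hf]; simp
      right_inv := fun x => by
        show (f (SemidirectProduct.inl (f.symm (SemidirectProduct.inl x)).left)).left = x
        rw [← hg]; simp
      map_mul' := fun x y => by
        apply SemidirectProduct.inl_injective (φ := ψ)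
        rw [← hf, map_mul, map_mul, map_mul, ← hf, ← hf] }
  have hα : ∀ x, f (SemidirectProduct.inl x) = SemidirectProduct.inl (α x) := hf
  have key : ∀ w : Zn n ⋊[φ] FreeGroup (Fin r),
      MulAut.conj α (φ w.right) = ψ (f w).right := by
    intro w
    rw [MulAut.conj_apply, mul_inv_eq_iff_eq_mul]
    ext1 x
    apply SemidirectProduct.inl_injective (φ := ψ)
    rw [MulAut.mul_apply, MulAut.mul_apply, ← hα, ← sd_conj_inl, ← sd_conj_inl, ← hα]
    simp
  refine ⟨α, ?_⟩
  ext β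
  constructor
  · rintro ⟨_, ⟨g, rfl⟩, rfl⟩
    exact ⟨_, (key (SemidirectProduct.inr g)).symm⟩
  · rintro ⟨k, rfl⟩
    refine ⟨_, ⟨(f.symm (SemidirectProduct.inr k)).right, rfl⟩, ?_⟩
    have := key (f.symm (SemidirectProduct.inr k))
    simpa using this
end

section
/- Let Γ be a subgroup of GL(2,ℚ) such that (i) the only Γ-invariant ℚ-subspaces of ℚ² are 0 and ℚ², and (ii) every ℚ-linear endomorphism of ℚ² commuting with every element of Γ is a scalar multiple of the identity. Let M be a subgroup of GL(2,ℚ) × GL(2,ℚ) (acting on ℚ² × ℚ² componentwise) which contains the diagonal subgroup Δ(Γ) = {(g,g) : g ∈ Γ} and contains at least one element (u,v) with u ≠ v. Then the only 2-dimensional M-invariant ℚ-subspaces of ℚ² × ℚ² are H_0 = ℚ² × {0} and H_∞ = {0} × ℚ². -/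
/-- The horizontal plane `H_0 = ℚ² × {0}` inside `ℚ² × ℚ²`. -/
def H0 : Submodule ℚ ((Fin 2 → ℚ) × (Fin 2 → ℚ)) :=
  (⊤ : Submodule ℚ (Fin 2 → ℚ)).prod (⊥ : Submodule ℚ (Fin 2 → ℚ))

/-- The vertical plane `H_∞ = {0} × ℚ²` inside `ℚ² × ℚ²`. -/
def Hinf : Submodule ℚ ((Fin 2 → ℚ) × (Fin 2 → ℚ)) :=
  (⊥ : Submodule ℚ (Fin 2 → ℚ)).prod (⊤ : Submodule ℚ (Fin 2 → ℚ))

theorem invariant_planes_of_overgroup_of_diagonal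
    (Γ : Subgroup (Matrix.GeneralLinearGroup (Fin 2) ℚ))
    (hirr : ∀ W : Submodule ℚ (Fin 2 → ℚ),
      (∀ g ∈ Γ, ∀ x ∈ W, (g : Matrix (Fin 2) (Fin 2) ℚ).mulVec x ∈ W) → W = ⊥ ∨ W = ⊤)
    (hcent : ∀ f : (Fin 2 → ℚ) →ₗ[ℚ] (Fin 2 → ℚ),
      (∀ g ∈ Γ, ∀ x : Fin 2 → ℚ,
        f ((g : Matrix (Fin 2) (Fin 2) ℚ).mulVec x) =
          (g : Matrix (Fin 2) (Fin 2) ℚ).mulVec (f x)) →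
      ∃ c : ℚ, f = c • LinearMap.id)
    (M : Subgroup (Matrix.GeneralLinearGroup (Fin 2) ℚ × Matrix.GeneralLinearGroup (Fin 2) ℚ))
    (hdiag : ∀ g ∈ Γ, (g, g) ∈ M)
    (hne : ∃ m ∈ M, m.1 ≠ m.2)
    (W : Submodule ℚ ((Fin 2 → ℚ) × (Fin 2 → ℚ)))
    (hrank : Module.rank ℚ W = 2)
    (hinv : ∀ m ∈ M, ∀ p ∈ W,
      ((m.1 : Matrix (Fin 2) (Fin 2) ℚ).mulVec p.1,
        (m.2 : Matrix (Fin 2) (Fin 2) ℚ).mulVec p.2) ∈ W) :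
    W = H0 ∨ W = Hinf := by
  have hfW : Module.finrank ℚ W = 2 := Module.finrank_eq_of_rank_eq hrank
  have h2 : Module.finrank ℚ (Fin 2 → ℚ) = 2 := by simp
  rcases hirr (W.comap (LinearMap.inr ℚ (Fin 2 → ℚ) (Fin 2 → ℚ))) (by
    intro g hg x hx
    have := hinv _ (hdiag g hg) _ hx
    simpa using this) with hK | hK
  · have hzero : ∀ y : Fin 2 → ℚ, ((0 : Fin 2 → ℚ), y) ∈ W → y = 0 := by
      intro y hy
      have : y ∈ W.comap (LinearMap.inr ℚ (Fin 2 → ℚ) (Fin 2 → ℚ)) := hy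
      rw [hK] at this
      simpa using this
    have huniq : ∀ x y z : Fin 2 → ℚ, (x, y) ∈ W → (x, z) ∈ W → y = z := by
      intro x y z hy hz
      have := W.sub_mem hy hz
      rw [Prod.mk_sub_mk, sub_self] at this
      exact sub_eq_zero.mp (hzero _ this)
    let φ : W →ₗ[ℚ] (Fin 2 → ℚ) := (LinearMap.fst ℚ (Fin 2 → ℚ) (Fin 2 → ℚ)).comp W.subtype
    have hinj : Function.Injective φ := by
      rintro ⟨⟨a, b⟩, h⟩ ⟨⟨a', b'⟩, h'⟩ hh
      have hh' : a = a' := hh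
      subst hh'
      have := huniq _ _ _ h h'
      subst this
      rfl
    let e := LinearEquiv.ofInjectiveOfFinrankEq φ hinj (hfW.trans h2.symm)
    let f : (Fin 2 → ℚ) →ₗ[ℚ] (Fin 2 → ℚ) :=
      ((LinearMap.snd ℚ (Fin 2 → ℚ) (Fin 2 → ℚ)).comp W.subtype).comp e.symm.toLinearMap
    have hf : ∀ x, (x, f x) ∈ W := by
      intro x
      have h1 : (e.symm x : (Fin 2 → ℚ) × (Fin 2 → ℚ)).1 = x := e.apply_symm_apply x
      have h3 := (e.symm x).2
      have h4 : (x, f x) = (e.symm x : (Fin 2 → ℚ) × (Fin 2 → ℚ)) := Prod.ext h1.symm rfl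
      rw [h4]; exact h3
    obtain ⟨c, hc⟩ := hcent f (by
      intro g hg x
      exact huniq _ _ _ (hf _) (hinv _ (hdiag g hg) _ (hf x)))
    have hcW : ∀ x : Fin 2 → ℚ, (x, c • x) ∈ W := by
      intro x
      have := hf x
      rw [hc] at this
      simpa using this
    left
    by_cases hc0 : c = 0
    · subst hc0
      ext ⟨x, y⟩
      have hx : (x, (0 : Fin 2 → ℚ)) ∈ W := by simpa using hcW x
      simp only [H0, Submodule.mem_prod, Submodule.mem_top, Submodule.mem_bot, true_and]
      constructor
      · intro h
        exact huniq _ _ _ h hx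
      · rintro rfl
        exact hx
    · exfalso
      obtain ⟨m, hm, hmne⟩ := hne
      apply hmne
      apply Units.ext
      apply Matrix.ext_of_mulVec_single
      intro i
      have h := huniq _ _ _ (hcW _) (hinv m hm _ (hcW (Pi.single i 1)))
      simp only [Matrix.mulVec_smul] at h
      exact smul_right_injective _ hc0 h
  · right
    symm
    apply Submodule.eq_of_le_of_finrank_eq
    · rintro ⟨x, y⟩ h
      simp only [Hinf, Submodule.mem_prod, Submodule.mem_top, Submodule.mem_bot, and_true] at h
      subst h
      have : y ∈ W.comap (LinearMap.inr ℚ (Fin 2 → ℚ) (Fin 2 → ℚ)) := by rw [hK]; trivial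
      exact this
    · have hr : Hinf = LinearMap.range (LinearMap.inr ℚ (Fin 2 → ℚ) (Fin 2 → ℚ)) := by
        ext ⟨x, y⟩
        simp [Hinf, eq_comm]
      rw [hfW, hr, LinearMap.finrank_range_of_inj LinearMap.inr_injective, h2]
end

section
/- The group homomorphism from F₂ = FreeGroup (Fin 2) to GL(2,ℤ) sending the first generator to S = [[1,2],[0,1]] and the second generator to T = [[1,0],[2,1]] is injective; that is, S and T generate a free subgroup of rank 2 of GL(2,ℤ). -/
/-- The matrix `S = [[1,2],[0,1]]` as an element of `GL(2,ℤ)`. -/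
def Sgl : Matrix.GeneralLinearGroup (Fin 2) ℤ :=
  ⟨!![1, 2; 0, 1], !![1, -2; 0, 1],
    by norm_num [Matrix.mul_fin_two, ← Matrix.one_fin_two],
    by norm_num [Matrix.mul_fin_two, ← Matrix.one_fin_two]⟩

/-- The matrix `T = [[1,0],[2,1]]` as an element of `GL(2,ℤ)`. -/
def Tgl : Matrix.GeneralLinearGroup (Fin 2) ℤ :=
  ⟨!![1, 0; 2, 1], !![1, 0; -2, 1],
    by norm_num [Matrix.mul_fin_two, ← Matrix.one_fin_two],
    by norm_num [Matrix.mul_fin_two, ← Matrix.one_fin_two]⟩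

def ppX : Fin 2 → ℤ → ℤ → Prop :=
  ![fun p q => 0 ≤ q * (p - q), fun p q => p = 0 ∨ 0 < p * (q - p)]

def ppY : Fin 2 → ℤ → ℤ → Prop :=
  ![fun p q => q * (p + q) < 0, fun p q => p ≠ 0 ∧ p * (p + q) ≤ 0]

theorem gl_col_ne (g : Matrix.GeneralLinearGroup (Fin 2) ℤ) :
    ¬ (g.1 0 0 = 0 ∧ g.1 1 0 = 0) := by
  rintro ⟨h0, h1⟩
  have h := (Matrix.isUnit_iff_isUnit_det g.1).1 g.isUnit
  rw [Matrix.det_fin_two, h0, h1] at h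
  simp at h

theorem S_mul (g : Matrix.GeneralLinearGroup (Fin 2) ℤ) :
    (Sgl * g).1 0 0 = g.1 0 0 + 2 * g.1 1 0 ∧ (Sgl * g).1 1 0 = g.1 1 0 := by
  constructor <;> simp [Sgl, Matrix.mul_apply, Fin.sum_univ_two]

theorem Sinv_mul (g : Matrix.GeneralLinearGroup (Fin 2) ℤ) :
    (Sgl⁻¹ * g).1 0 0 = g.1 0 0 - 2 * g.1 1 0 ∧ (Sgl⁻¹ * g).1 1 0 = g.1 1 0 := by
  have h := S_mul (Sgl⁻¹ * g)
  rw [mul_inv_cancel_left] at h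
  omega

theorem T_mul (g : Matrix.GeneralLinearGroup (Fin 2) ℤ) :
    (Tgl * g).1 0 0 = g.1 0 0 ∧ (Tgl * g).1 1 0 = g.1 1 0 + 2 * g.1 0 0 := by
  constructor <;> simp [Tgl, Matrix.mul_apply, Fin.sum_univ_two, add_comm]

theorem Tinv_mul (g : Matrix.GeneralLinearGroup (Fin 2) ℤ) :
    (Tgl⁻¹ * g).1 0 0 = g.1 0 0 ∧ (Tgl⁻¹ * g).1 1 0 = g.1 1 0 - 2 * g.1 0 0 := by
  have h := T_mul (Tgl⁻¹ * g)
  rw [mul_inv_cancel_left] at h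
  omega

theorem ppX_disj (p q : ℤ) (h : ¬ (p = 0 ∧ q = 0)) (h0 : ppX 0 p q) (h1 : ppX 1 p q) : False := by
  simp only [ppX, Matrix.cons_val_zero, Matrix.cons_val_one] at h0 h1
  rcases h1 with rfl | h1
  · exact h ⟨rfl, by nlinarith⟩
  · nlinarith [sq_nonneg (p - q)]

theorem ppY_disj (p q : ℤ) (h0 : ppY 0 p q) (h1 : ppY 1 p q) : False := by
  simp only [ppY, Matrix.cons_val_zero, Matrix.cons_val_one] at h0 h1
  nlinarith [sq_nonneg (p + q), h1.2]

theorem ppXY_disj (i j : Fin 2) (p q : ℤ) (h0 : ppX i p q) (h1 : ppY j p q) : False := by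
  fin_cases i <;> fin_cases j <;> simp [ppX, ppY] at h0 h1
  · nlinarith [sq_nonneg q]
  · have := pow_pos (abs_pos.2 h1.1) 2
    rw [sq_abs] at this
    nlinarith [sq_nonneg q, h1.2]
  · rcases h0 with rfl | h0
    · nlinarith [sq_nonneg q]
    · nlinarith [sq_nonneg q, sq_nonneg p]
  · rcases h0 with rfl | h0
    · exact h1.1 rfl
    · nlinarith [sq_nonneg p, h1.2]

theorem lift_S_T_injective :
    Function.Injective
      (FreeGroup.lift ![Sgl, Tgl] :
        FreeGroup (Fin 2) →* Matrix.GeneralLinearGroup (Fin 2) ℤ) := by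
  apply FreeGroup.injective_lift_of_ping_pong (α := Matrix.GeneralLinearGroup (Fin 2) ℤ) _
    (fun i => {g | ppX i (g.1 0 0) (g.1 1 0)}) (fun i => {g | ppY i (g.1 0 0) (g.1 1 0)})
  · intro i
    fin_cases i
    · exact ⟨1, by simp [ppX]⟩
    · exact ⟨Tgl, by simp [ppX, Tgl]⟩
  · intro i j hij
    refine Set.disjoint_left.2 fun g h0 h1 => ?_
    fin_cases i <;> fin_cases j
    · exact hij rfl
    · exact ppX_disj _ _ (gl_col_ne g) h0 h1
    · exact ppX_disj _ _ (gl_col_ne g) h1 h0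
    · exact hij rfl
  · intro i j hij
    refine Set.disjoint_left.2 fun g h0 h1 => ?_
    fin_cases i <;> fin_cases j
    · exact hij rfl
    · exact ppY_disj _ _ h0 h1
    · exact ppY_disj _ _ h1 h0
    · exact hij rfl
  · intro i j
    exact Set.disjoint_left.2 fun g h0 h1 => ppXY_disj i j _ _ h0 h1
  · rintro i _ ⟨g, hg, rfl⟩
    fin_cases i
    · change ¬ (_ < (0 : ℤ)) at hg
      change (0 : ℤ) ≤ (Sgl * g).1 1 0 * ((Sgl * g).1 0 0 - (Sgl * g).1 1 0)
      rw [(S_mul g).1, (S_mul g).2]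
      nlinarith
    · change ¬ (g.1 0 0 ≠ 0 ∧ g.1 0 0 * (g.1 0 0 + g.1 1 0) ≤ 0) at hg
      change (Tgl * g).1 0 0 = 0 ∨ 0 < (Tgl * g).1 0 0 * ((Tgl * g).1 1 0 - (Tgl * g).1 0 0)
      rw [(T_mul g).1, (T_mul g).2]
      by_cases h : g.1 0 0 = 0
      · exact Or.inl h
      · right
        have := not_le.1 fun h' => hg ⟨h, h'⟩
        nlinarith
  · rintro i _ ⟨g, hg, rfl⟩
    fin_cases i
    · change ¬ ((0 : ℤ) ≤ g.1 1 0 * (g.1 0 0 - g.1 1 0)) at hg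
      change (Sgl⁻¹ * g).1 1 0 * ((Sgl⁻¹ * g).1 0 0 + (Sgl⁻¹ * g).1 1 0) < 0
      rw [(Sinv_mul g).1, (Sinv_mul g).2]
      nlinarith
    · change ¬ (g.1 0 0 = 0 ∨ 0 < g.1 0 0 * (g.1 1 0 - g.1 0 0)) at hg
      change (Tgl⁻¹ * g).1 0 0 ≠ 0 ∧ (Tgl⁻¹ * g).1 0 0 * ((Tgl⁻¹ * g).1 0 0 + (Tgl⁻¹ * g).1 1 0) ≤ 0
      rw [(Tinv_mul g).1, (Tinv_mul g).2]
      refine ⟨fun h => hg (Or.inl h), ?_⟩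
      have := not_lt.1 fun h' => hg (Or.inr h')
      nlinarith
end

section
/- The subgroup of GL(2,ℤ) generated by the two matrices S = [[1,2],[0,1]] and T = [[1,0],[2,1]] has finite index in GL(2,ℤ). -/
lemma key_mem (n : ℕ) : ∀ g : Matrix.GeneralLinearGroup (Fin 2) ℤ,
    (g.1 0 0).natAbs + (g.1 1 0).natAbs ≤ n → g.1 0 0 % 4 = 1 → g.1 1 1 % 4 = 1 →
    g.1 0 1 % 2 = 0 → g.1 1 0 % 2 = 0 → g.1 0 0 * g.1 1 1 - g.1 0 1 * g.1 1 0 = 1 →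
    g ∈ Subgroup.closure ({Sgl, Tgl} : Set (Matrix.GeneralLinearGroup (Fin 2) ℤ)) := by
  have hS : Sgl ∈ Subgroup.closure ({Sgl, Tgl} : Set (Matrix.GeneralLinearGroup (Fin 2) ℤ)) :=
    Subgroup.subset_closure (by simp)
  have hT : Tgl ∈ Subgroup.closure ({Sgl, Tgl} : Set (Matrix.GeneralLinearGroup (Fin 2) ℤ)) :=
    Subgroup.subset_closure (by simp)
  have hSi := Subgroup.inv_mem _ hS
  have hTi := Subgroup.inv_mem _ hT
  have eS : Sgl.1 = !![1, 2; 0, 1] := rfl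
  have eT : Tgl.1 = !![1, 0; 2, 1] := rfl
  have eSi : (Sgl⁻¹).1 = !![1, -2; 0, 1] := rfl
  have eTi : (Tgl⁻¹).1 = !![1, 0; -2, 1] := rfl
  have hpow : ∀ k : ℕ, (Sgl ^ k).1 = !![1, 2 * (k : ℤ); 0, 1] ∧
      ((Sgl⁻¹) ^ k).1 = !![1, -2 * (k : ℤ); 0, 1] := by
    intro k
    induction k with
    | zero => constructor <;> simp [Matrix.one_fin_two]
    | succ k ih =>
      rw [pow_succ, pow_succ, Units.val_mul, Units.val_mul, ih.1, ih.2, eS, eSi]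
      constructor <;> simp [Matrix.mul_fin_two] <;> ring
  induction n with
  | zero => intro g h0 h1; omega
  | succ n ih =>
    intro g hn ha hd hb hc hdet
    have step : ∀ M ∈ Subgroup.closure ({Sgl, Tgl} : Set (Matrix.GeneralLinearGroup (Fin 2) ℤ)),
        M * g ∈ Subgroup.closure ({Sgl, Tgl} : Set (Matrix.GeneralLinearGroup (Fin 2) ℤ)) →
        g ∈ Subgroup.closure ({Sgl, Tgl} : Set (Matrix.GeneralLinearGroup (Fin 2) ℤ)) :=
      fun M hM h => (Subgroup.mul_mem_cancel_left _ hM).1 h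
    obtain ⟨a, ea⟩ : ∃ a, g.1 0 0 = a := ⟨_, rfl⟩
    obtain ⟨b, eb⟩ : ∃ a, g.1 0 1 = a := ⟨_, rfl⟩
    obtain ⟨c, ec⟩ : ∃ a, g.1 1 0 = a := ⟨_, rfl⟩
    obtain ⟨d, ed⟩ : ∃ a, g.1 1 1 = a := ⟨_, rfl⟩
    have eg : g.1 = !![a, b; c, d] := by
      rw [Matrix.eta_fin_two g.1, ea, eb, ec, ed]
    rw [ea, ec] at hn
    rw [ea] at ha
    rw [ed] at hd
    rw [eb] at hb
    rw [ec] at hc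
    rw [ea, eb, ec, ed] at hdet
    clear ea eb ec ed
    by_cases h0 : c = 0
    · subst h0
      have h1 : a * d = 1 := by linarith
      have : a = 1 := by
        rcases Int.eq_one_or_neg_one_of_mul_eq_one h1 with h | h <;> omega
      subst this
      have : d = 1 := by linarith
      subst this
      rcases le_total 0 b with h | h
      · have : g = Sgl ^ (b / 2).toNat := by
          apply Units.ext
          rw [(hpow _).1, eg, show 2 * ((b / 2).toNat : ℤ) = b by omega]
        rw [this]; exact Subgroup.pow_mem _ hS _
      · have : g = Sgl⁻¹ ^ (-b / 2).toNat := by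
          apply Units.ext
          rw [(hpow _).2, eg, show -2 * ((-b / 2).toNat : ℤ) = b by omega]
        rw [this]; exact Subgroup.pow_mem _ hSi _
    · have caseS : (a + 2 * c).natAbs < a.natAbs → g ∈ Subgroup.closure ({Sgl, Tgl} : Set (Matrix.GeneralLinearGroup (Fin 2) ℤ)) := by
        intro h
        have e : (Sgl * g).1 = !![a + 2 * c, b + 2 * d; c, d] := by
          rw [Units.val_mul, eS, eg]; simp [Matrix.mul_fin_two]
        apply step _ hS
        apply ih <;> rw [e] <;> simp <;> first | omega | linarith
      have caseSi : (a - 2 * c).natAbs < a.natAbs → g ∈ Subgroup.closure ({Sgl, Tgl} : Set (Matrix.GeneralLinearGroup (Fin 2) ℤ)) := by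
        intro h
        have e : (Sgl⁻¹ * g).1 = !![a - 2 * c, b - 2 * d; c, d] := by
          rw [Units.val_mul, eSi, eg]; simp [Matrix.mul_fin_two]; constructor <;> ring
        apply step _ hSi
        apply ih <;> rw [e] <;> simp <;> first | omega | linarith
      have caseT : (c + 2 * a).natAbs < c.natAbs → g ∈ Subgroup.closure ({Sgl, Tgl} : Set (Matrix.GeneralLinearGroup (Fin 2) ℤ)) := by
        intro h
        have e : (Tgl * g).1 = !![a, b; c + 2 * a, d + 2 * b] := by
          rw [Units.val_mul, eT, eg]; simp [Matrix.mul_fin_two]; constructor <;> ring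
        apply step _ hT
        apply ih <;> rw [e] <;> simp <;> first | omega | linarith
      have caseTi : (c - 2 * a).natAbs < c.natAbs → g ∈ Subgroup.closure ({Sgl, Tgl} : Set (Matrix.GeneralLinearGroup (Fin 2) ℤ)) := by
        intro h
        have e : (Tgl⁻¹ * g).1 = !![a, b; c - 2 * a, d - 2 * b] := by
          rw [Units.val_mul, eTi, eg]; simp [Matrix.mul_fin_two]; constructor <;> ring
        apply step _ hTi
        apply ih <;> rw [e] <;> simp <;> first | omega | linarith
      have : (a + 2 * c).natAbs < a.natAbs ∨ (a - 2 * c).natAbs < a.natAbs ∨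
        (c + 2 * a).natAbs < c.natAbs ∨ (c - 2 * a).natAbs < c.natAbs := by omega
      rcases this with h | h | h | h
      exacts [caseS h, caseSi h, caseT h, caseTi h]

theorem closure_S_T_finiteIndex :
    (Subgroup.closure ({Sgl, Tgl} : Set (Matrix.GeneralLinearGroup (Fin 2) ℤ))).index ≠ 0 := by
  let f := Matrix.GeneralLinearGroup.map (n := Fin 2) (Int.castRingHom (ZMod 4))
  have hle : f.ker ≤ Subgroup.closure ({Sgl, Tgl} : Set (Matrix.GeneralLinearGroup (Fin 2) ℤ)) := by
    intro g hg
    have h1 : ∀ i j, ((g.1 i j : ℤ) : ZMod 4) = (1 : Matrix (Fin 2) (Fin 2) (ZMod 4)) i j := by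
      intro i j
      have := congrArg (fun x : Matrix.GeneralLinearGroup (Fin 2) (ZMod 4) => x.1 i j)
        (MonoidHom.mem_ker.1 hg)
      simpa [f] using this
    have h00 : g.1 0 0 % 4 = 1 := by
      have : ((g.1 0 0 : ℤ) : ZMod 4) = ((1 : ℤ) : ZMod 4) := by simpa using h1 0 0
      exact (ZMod.intCast_eq_intCast_iff' _ _ 4).1 this
    have h11 : g.1 1 1 % 4 = 1 := by
      have : ((g.1 1 1 : ℤ) : ZMod 4) = ((1 : ℤ) : ZMod 4) := by simpa using h1 1 1
      exact (ZMod.intCast_eq_intCast_iff' _ _ 4).1 this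
    have h01 : g.1 0 1 % 4 = 0 := by
      have : ((g.1 0 1 : ℤ) : ZMod 4) = ((0 : ℤ) : ZMod 4) := by simpa using h1 0 1
      exact (ZMod.intCast_eq_intCast_iff' _ _ 4).1 this
    have h10 : g.1 1 0 % 4 = 0 := by
      have : ((g.1 1 0 : ℤ) : ZMod 4) = ((0 : ℤ) : ZMod 4) := by simpa using h1 1 0
      exact (ZMod.intCast_eq_intCast_iff' _ _ 4).1 this
    refine key_mem _ g le_rfl h00 h11 (by omega) (by omega) ?_
    have hu : IsUnit (g.1.det) := (Matrix.isUnit_iff_isUnit_det _).1 g.isUnit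
    rw [Matrix.det_fin_two, Int.isUnit_iff] at hu
    have hm : (g.1 0 0 * g.1 1 1 - g.1 0 1 * g.1 1 0) % 4 = 1 := by
      rw [Int.sub_emod, Int.mul_emod, h00, h11, Int.mul_emod (g.1 0 1), h01, h10]; rfl
    omega
  have : f.ker.FiniteIndex := inferInstance
  exact (Subgroup.finiteIndex_of_le hle).index_ne_zero
end
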